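/- Let A1 ⊂ A2 ⊂ ... be an increasing sequence of subsets of ℝ^n and A = ⋃_j A_j. Then lim_{j→∞} cap₁(A_j) = cap₁(A), where cap₁ denotes the Sobolev 1-capacity. -/

import Mathlib

open MeasureTheory Metric Set Filter ENNReal Topology

noncomputable section

/-- Euclidean space `ℝⁿ`. -/
abbrev En (n : ℕ) : Type := EuclideanSpace ℝ (Fin n)

variable {n : ℕ}

/-- `g` is the weak (distributional) gradient of `u : ℝⁿ → ℝ` on all of `ℝⁿ`. -/
def IsWeakGrad (u : En n → ℝ) (g : En n → (En n →L[ℝ] ℝ)) : Prop :=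
  ∀ φ : En n → ℝ, ContDiff ℝ 1 φ → HasCompactSupport φ →
    ∀ v : En n, ∫ x, u x * fderiv ℝ φ x v = - ∫ x, φ x * g x v

/-- The Sobolev 1-capacity: infimum of `W^{1,1}` norms of functions `u ≥ 1` on a
neighborhood of `A`. -/
def cap1 (A : Set (En n)) : ℝ≥0∞ :=
  sInf { c : ℝ≥0∞ | ∃ u : En n → ℝ, ∃ g : En n → (En n →L[ℝ] ℝ),
    Integrable u ∧ Integrable (fun x => ‖g x‖) ∧ IsWeakGrad u g ∧
    (∃ V : Set (En n), IsOpen V ∧ A ⊆ V ∧ ∀ x ∈ V, 1 ≤ u x) ∧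
    c = ENNReal.ofReal ((∫ x, |u x|) + ∫ x, ‖g x‖) }

/-- A set `U ⊆ ℝⁿ` is 1-finely open. -/
def FinelyOpen1 (U : Set (En n)) : Prop :=
  ∀ x ∈ U, Tendsto (fun r : ℝ => cap1 (Uᶜ ∩ ball x r) / ENNReal.ofReal (r ^ (n - 1)))
    (𝓝[>] 0) (𝓝 0)

/-- The relaxed quasiconformality quotient `K_{f,U}(x,r)`. -/
def KfU (f : En n → En n) (U : Set (En n)) (x : En n) (r : ℝ) : ℝ≥0∞ :=
  if volume (f '' ball x r) = 0 then ∞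
  else (EMetric.diam (f '' (ball x r ∩ U)) ^ n / volume (f '' ball x r)) ^ (((n : ℝ) - 1)⁻¹)

/-- Fine quasiconformal dilatation `K_f^fine(x)`. -/
def Kfine (f : En n → En n) (x : En n) : ℝ≥0∞ :=
  ⨅ (U : Set (En n)) (_ : FinelyOpen1 U) (_ : x ∈ U),
    Filter.limsup (fun r => KfU f U x r) (𝓝[>] 0)

/-- Metric quasiconformal dilatation `K_f(x)`. -/
def Kmetric (f : En n → En n) (x : En n) : ℝ≥0∞ :=
  Filter.limsup (fun r => KfU f univ x r) (𝓝[>] 0)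

/-- Volume derivative (Jacobian) `J_f(x)`. -/
def Jvol (f : En n → En n) (x : En n) : ℝ≥0∞ :=
  Filter.limsup (fun r => volume (f '' ball x r) / volume (ball x r)) (𝓝[>] 0)

/-- `g` is the weak gradient of the mapping `f : ℝⁿ → ℝⁿ` on the open set `Ω`. -/
def HasWeakGradOn (f : En n → En n) (g : En n → (En n →L[ℝ] En n)) (Ω : Set (En n)) : Prop :=
  ∀ φ : En n → ℝ, ContDiff ℝ 1 φ → HasCompactSupport φ → tsupport φ ⊆ Ω →
    ∀ v : En n, ∫ x in Ω, (fderiv ℝ φ x v) • f x = - ∫ x in Ω, φ x • g x v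

/-- The precise representative `f*` (componentwise limsup of ball averages). -/
def precise (f : En n → En n) (x : En n) : En n :=
  (EuclideanSpace.equiv (Fin n) ℝ).symm
    (fun i => Filter.limsup (fun r => ⨍ y in ball x r, f y i) (𝓝[>] 0))

/-- Centered Hardy–Littlewood maximal function of `u : ℝⁿ → ℝ`. -/
def maxFn (u : En n → ℝ) (x : En n) : ℝ≥0∞ :=
  ⨆ (r : ℝ) (_ : 0 < r), (volume (ball x r))⁻¹ * ∫⁻ y in ball x r, ‖u y‖₊

/-- Centered Hardy–Littlewood maximal function of `ρ : ℝⁿ → ℝ≥0∞`. -/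
def maxFn' (ρ : En n → ℝ≥0∞) (x : En n) : ℝ≥0∞ :=
  ⨆ (r : ℝ) (_ : 0 < r), (volume (ball x r))⁻¹ * ∫⁻ y in ball x r, ρ y

/-!
Nearly optimal test functions for the sets `A k` can be taken increasing, because truncation gives
`‖max u v‖ + ‖min u v‖ ≤ ‖u‖ + ‖v‖`. Their limit `w` need not be a Sobolev function, since bounded
sets of `W^{1,1}` are not weakly compact, so it is not a test function for the union. A
mollification of `w`, however, is a Sobolev function with nearly optimal norm. Splitting it at a
small level `s`, the superlevel set `W` has capacity at most about `sup cap (A k)`; and since the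
part above the level already exhausts almost all of the norm, the test functions have little
gradient where the mollification is small. There a Poincaré inequality and a cutoff show that
`A k \ W` has capacity at most `ε`, uniformly in `k`. Repeating this with `A k \ W` in place of
`A k` and a summable sequence of `ε`'s covers the union, up to a set of capacity zero, by sets `W i`
whose capacities add up to at most `sup cap (A k)` plus a small error.
-/

section L1Convergence

variable {α ι F : Type*} [NormedAddCommGroup F] [MeasurableSpace α] {μ : Measure α}

theorem abs_setIntegral_norm_sub_setIntegral_norm_le {f g : α → F} (hf : Integrable f μ)
    (hg : Integrable g μ) (P : Set α) :
    |(∫ x in P, ‖f x‖ ∂μ) - ∫ x in P, ‖g x‖ ∂μ| ≤ ∫ x, ‖f x - g x‖ ∂μ := by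
  rw [← integral_sub hf.norm.restrict hg.norm.restrict]
  calc |∫ x in P, (‖f x‖ - ‖g x‖) ∂μ| ≤ ∫ x in P, |‖f x‖ - ‖g x‖| ∂μ := abs_integral_le_integral_abs
    _ ≤ ∫ x in P, ‖f x - g x‖ ∂μ :=
        integral_mono (hf.norm.sub hg.norm).abs.restrict (hf.sub hg).norm.restrict
          fun x => abs_norm_sub_norm_le _ _
    _ ≤ ∫ x, ‖f x - g x‖ ∂μ :=
        setIntegral_le_integral (hf.sub hg).norm (ae_of_all _ fun x => norm_nonneg _)

theorem tendsto_setIntegral_norm {f : ι → α → F} {f₀ : α → F} {l : Filter ι}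
    (hf : ∀ i, Integrable (f i) μ) (hf₀ : Integrable f₀ μ)
    (hlim : Tendsto (fun i => ∫ x, ‖f i x - f₀ x‖ ∂μ) l (𝓝 0)) (P : Set α) :
    Tendsto (fun i => ∫ x in P, ‖f i x‖ ∂μ) l (𝓝 (∫ x in P, ‖f₀ x‖ ∂μ)) :=
  tendsto_iff_dist_tendsto_zero.2 <| squeeze_zero (fun _ => dist_nonneg)
    (fun i => abs_setIntegral_norm_sub_setIntegral_norm_le (hf i) hf₀ P) hlim

theorem tendsto_integral_smul [NormedSpace ℝ F] {f : ι → α → F} {f₀ : α → F} {ψ : α → ℝ} {C : ℝ}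
    {l : Filter ι} (hf : ∀ i, Integrable (f i) μ) (hf₀ : Integrable f₀ μ)
    (hlim : Tendsto (fun i => ∫ x, ‖f i x - f₀ x‖ ∂μ) l (𝓝 0))
    (hψ : AEStronglyMeasurable ψ μ) (hC : ∀ x, ‖ψ x‖ ≤ C) :
    Tendsto (fun i => ∫ x, ψ x • f i x ∂μ) l (𝓝 (∫ x, ψ x • f₀ x ∂μ)) := by
  refine tendsto_iff_dist_tendsto_zero.2 <| squeeze_zero (fun _ => dist_nonneg) (fun i => ?_)
    (by simpa only [mul_zero] using hlim.const_mul C)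
  have hψf : ∀ {k : α → F}, Integrable k μ → Integrable (fun x => ψ x • k x) μ :=
    fun hk => hk.bdd_smul C hψ (ae_of_all _ hC)
  rw [dist_eq_norm, ← integral_sub (hψf (hf i)) (hψf hf₀), ← integral_const_mul]
  refine norm_integral_le_of_norm_le (((hf i).sub hf₀).norm.const_mul C) (ae_of_all _ fun x => ?_)
  rw [← smul_sub, norm_smul]
  exact mul_le_mul_of_nonneg_right (hC x) (norm_nonneg _)

-- Scheffé's lemma: the defect of the triangle inequality for `f i = f₀ + (f i - f₀)` is dominated.
theorem tendsto_integral_norm_sub_of_integral_norm_le {f : ι → α → F} {f₀ : α → F} {l : Filter ι}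
    [l.IsCountablyGenerated] (hf : ∀ i, Integrable (f i) μ) (hf₀ : Integrable f₀ μ)
    (hlim : ∀ᵐ x ∂μ, Tendsto (fun i => f i x) l (𝓝 (f₀ x)))
    (hle : ∀ i, ∫ x, ‖f i x‖ ∂μ ≤ ∫ x, ‖f₀ x‖ ∂μ) :
    Tendsto (fun i => ∫ x, ‖f i x - f₀ x‖ ∂μ) l (𝓝 0) := by
  have hd : ∀ i, Integrable (fun x => ‖f i x - f₀ x‖) μ := fun i => ((hf i).sub hf₀).norm
  have hdefect : Tendsto (fun i => ∫ x, (‖f₀ x‖ + ‖f i x‖ - ‖f i x - f₀ x‖) ∂μ) l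
      (𝓝 (∫ x, 2 * ‖f₀ x‖ ∂μ)) := by
    refine tendsto_integral_filter_of_dominated_convergence (fun x => 2 * ‖f₀ x‖)
      (.of_forall fun i => ((hf₀.norm.add (hf i).norm).sub (hd i)).aestronglyMeasurable)
      (.of_forall fun i => ae_of_all _ fun x => ?_) (hf₀.norm.const_mul 2) ?_
    · rw [Real.norm_of_nonneg (by linarith [norm_sub_le (f i x) (f₀ x)])]
      linarith [norm_le_norm_sub_add (f i x) (f₀ x)]
    · filter_upwards [hlim] with x hx
      simpa [two_mul] using (hx.norm.const_add ‖f₀ x‖).sub (hx.sub_const (f₀ x)).norm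
  rw [integral_const_mul] at hdefect
  refine squeeze_zero (fun _ => integral_nonneg fun _ => norm_nonneg _) (fun i => ?_)
    (by simpa only [sub_self] using hdefect.const_sub (2 * ∫ x, ‖f₀ x‖ ∂μ))
  have hsum : ∫ x, (‖f₀ x‖ + ‖f i x‖ - ‖f i x - f₀ x‖) ∂μ
      = (∫ x, ‖f₀ x‖ ∂μ) + (∫ x, ‖f i x‖ ∂μ) - ∫ x, ‖f i x - f₀ x‖ ∂μ := by
    rw [← integral_add hf₀.norm (hf i).norm]
    exact integral_sub (hf₀.norm.add (hf i).norm) (hd i)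
  linarith [hle i]

theorem integrable_of_tendsto_of_norm_le {f : ι → α → F} {f₀ : α → F} {bound : α → ℝ} {l : Filter ι}
    [l.NeBot] [l.IsCountablyGenerated] (hf : ∀ i, AEStronglyMeasurable (f i) μ)
    (hbound : Integrable bound μ) (hle : ∀ i x, ‖f i x‖ ≤ bound x)
    (hlim : ∀ᵐ x ∂μ, Tendsto (fun i => f i x) l (𝓝 (f₀ x))) : Integrable f₀ μ :=
  hbound.mono' (aestronglyMeasurable_of_tendsto_ae l hf hlim) <|
    hlim.mono fun x hx => le_of_tendsto hx.norm (.of_forall fun i => hle i x)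

theorem integrable_of_tendsto_of_integral_norm_le {f : ℕ → α → F} {f₀ : α → F}
    {C : ℝ} (hf : ∀ i, Integrable (f i) μ) (hC : ∀ i, ∫ x, ‖f i x‖ ∂μ ≤ C)
    (hlim : ∀ᵐ x ∂μ, Tendsto (fun i => f i x) atTop (𝓝 (f₀ x))) : Integrable f₀ μ := by
  refine ⟨aestronglyMeasurable_of_tendsto_ae atTop (fun i => (hf i).aestronglyMeasurable) hlim, ?_⟩
  calc ∫⁻ x, ‖f₀ x‖ₑ ∂μ = ∫⁻ x, liminf (fun i => ‖f i x‖ₑ) atTop ∂μ :=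
        lintegral_congr_ae (hlim.mono fun x hx => hx.enorm.liminf_eq.symm)
    _ ≤ liminf (fun i => ∫⁻ x, ‖f i x‖ₑ ∂μ) atTop :=
        lintegral_liminf_le' fun i => (hf i).aestronglyMeasurable.enorm
    _ ≤ liminf (fun _ : ℕ => ENNReal.ofReal C) atTop :=
        liminf_le_liminf <| Eventually.of_forall fun i => by
          rw [← ofReal_integral_norm_eq_lintegral_enorm (hf i)]
          exact ENNReal.ofReal_le_ofReal (hC i)
    _ < ∞ := by simp only [liminf_const, ENNReal.ofReal_lt_top]

theorem tendsto_integral_norm_sub_of_norm_le {f : ι → α → F} {f₀ : α → F} {bound : α → ℝ}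
    {l : Filter ι} [l.NeBot] [l.IsCountablyGenerated] (hf : ∀ i, AEStronglyMeasurable (f i) μ)
    (hbound : Integrable bound μ) (hle : ∀ i x, ‖f i x‖ ≤ bound x)
    (hlim : ∀ᵐ x ∂μ, Tendsto (fun i => f i x) l (𝓝 (f₀ x))) :
    Tendsto (fun i => ∫ x, ‖f i x - f₀ x‖ ∂μ) l (𝓝 0) := by
  have hf₀ := integrable_of_tendsto_of_norm_le hf hbound hle hlim
  rw [← integral_zero α ℝ]
  refine tendsto_integral_filter_of_dominated_convergence (fun x => bound x + ‖f₀ x‖)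
    (.of_forall fun i => ((hf i).sub hf₀.aestronglyMeasurable).norm)
    (.of_forall fun i => ae_of_all _ fun x => ?_) (hbound.add hf₀.norm) ?_
  · rw [norm_norm]
    exact (norm_sub_le _ _).trans (add_le_add_left (hle i x) _)
  · filter_upwards [hlim] with x hx using tendsto_iff_norm_sub_tendsto_zero.1 hx

theorem tendsto_integral_norm_smul_sub_smul [NormedSpace ℝ F] {f : ι → α → F} {f₀ : α → F}
    {ψ : ι → α → ℝ} {ψ₀ : α → ℝ} {C : ℝ} {l : Filter ι} [l.NeBot] [l.IsCountablyGenerated]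
    (hf : ∀ i, Integrable (f i) μ) (hf₀ : Integrable f₀ μ)
    (hlim : Tendsto (fun i => ∫ x, ‖f i x - f₀ x‖ ∂μ) l (𝓝 0))
    (hψ : ∀ i, AEStronglyMeasurable (ψ i) μ) (hC : ∀ i x, ‖ψ i x‖ ≤ C)
    (hψlim : ∀ᵐ x ∂μ, Tendsto (fun i => ψ i x) l (𝓝 (ψ₀ x))) :
    Tendsto (fun i => ∫ x, ‖ψ i x • f i x - ψ₀ x • f₀ x‖ ∂μ) l (𝓝 0) := by
  have hle : ∀ i x, ‖ψ i x • f₀ x‖ ≤ C * ‖f₀ x‖ := fun i x => by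
    rw [norm_smul]
    exact mul_le_mul_of_nonneg_right (hC i x) (norm_nonneg _)
  have hψf₀ : ∀ᵐ x ∂μ, Tendsto (fun i => ψ i x • f₀ x) l (𝓝 (ψ₀ x • f₀ x)) :=
    hψlim.mono fun x hx => hx.smul_const (f₀ x)
  have hm : ∀ i, AEStronglyMeasurable (fun x => ψ i x • f₀ x) μ :=
    fun i => (hψ i).smul hf₀.aestronglyMeasurable
  have hd := fun i => (hf₀.norm.const_mul C).mono' (hm i) (ae_of_all _ (hle i))
  have hd₀ := integrable_of_tendsto_of_norm_le hm (hf₀.norm.const_mul C) hle hψf₀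
  refine squeeze_zero (fun _ => integral_nonneg fun _ => norm_nonneg _) (fun i => ?_) <| by
    simpa only [mul_zero, add_zero] using (hlim.const_mul C).add
      (tendsto_integral_norm_sub_of_norm_le hm (hf₀.norm.const_mul C) hle hψf₀)
  have hi : Integrable (fun x => C * ‖f i x - f₀ x‖) μ := ((hf i).sub hf₀).norm.const_mul C
  have hi' : Integrable (fun x => ‖ψ i x • f₀ x - ψ₀ x • f₀ x‖) μ := ((hd i).sub hd₀).norm
  rw [← integral_const_mul, ← integral_add hi hi']
  refine integral_mono_of_nonneg (ae_of_all _ fun _ => norm_nonneg _) (hi.add hi')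
    (ae_of_all _ fun x => ?_)
  calc ‖ψ i x • f i x - ψ₀ x • f₀ x‖
      ≤ ‖ψ i x • f i x - ψ i x • f₀ x‖ + ‖ψ i x • f₀ x - ψ₀ x • f₀ x‖ :=
        norm_sub_le_norm_sub_add_norm_sub _ _ _
    _ ≤ C * ‖f i x - f₀ x‖ + ‖ψ i x • f₀ x - ψ₀ x • f₀ x‖ := by
        rw [← smul_sub, norm_smul]
        gcongr
        exact hC i x

end L1Convergence

section L1Series

variable {α F : Type*} [NormedAddCommGroup F] [MeasurableSpace α] {μ : Measure α} {f : ℕ → α → F}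

theorem tsum_lintegral_enorm_ne_top (hf : ∀ i, Integrable (f i) μ)
    (hs : Summable fun i => ∫ x, ‖f i x‖ ∂μ) : ∑' i, ∫⁻ x, ‖f i x‖ₑ ∂μ ≠ ∞ := by
  simpa only [← fun i => ofReal_integral_norm_eq_lintegral_enorm (hf i)] using hs.tsum_ofReal_ne_top

theorem ae_summable_norm_of_summable_integral_norm (hf : ∀ i, Integrable (f i) μ)
    (hs : Summable fun i => ∫ x, ‖f i x‖ ∂μ) : ∀ᵐ x ∂μ, Summable fun i => ‖f i x‖ := by
  refine summable_norm_of_tsum_eLpNorm_ne_top le_rfl (fun i => (hf i).aestronglyMeasurable) ?_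
  simpa only [eLpNorm_one_eq_lintegral_enorm] using tsum_lintegral_enorm_ne_top hf hs

variable [CompleteSpace F]

theorem integrable_tsum_of_summable_integral_norm (hf : ∀ i, Integrable (f i) μ)
    (hs : Summable fun i => ∫ x, ‖f i x‖ ∂μ) : Integrable (fun x => ∑' i, f i x) μ := by
  refine ⟨aestronglyMeasurable_of_tendsto_ae (u := atTop)
    (f := fun N x => ∑ i ∈ Finset.range N, f i x)
    (fun N => (integrable_finsetSum _ fun i _ => hf i).aestronglyMeasurable) ?_, ?_⟩
  · filter_upwards [ae_summable_norm_of_summable_integral_norm hf hs] with x hx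
    exact hx.of_norm.hasSum.tendsto_sum_nat
  · calc ∫⁻ x, ‖∑' i, f i x‖ₑ ∂μ ≤ ∫⁻ x, ∑' i, ‖f i x‖ₑ ∂μ :=
          lintegral_mono fun x => enorm_tsum_le_tsum_enorm
      _ = ∑' i, ∫⁻ x, ‖f i x‖ₑ ∂μ := lintegral_tsum fun i => (hf i).aestronglyMeasurable.enorm
      _ < ∞ := (tsum_lintegral_enorm_ne_top hf hs).lt_top

theorem integral_norm_tsum_le (hf : ∀ i, Integrable (f i) μ)
    (hs : Summable fun i => ∫ x, ‖f i x‖ ∂μ) :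
    ∫ x, ‖∑' i, f i x‖ ∂μ ≤ ∑' i, ∫ x, ‖f i x‖ ∂μ := by
  have hs' : Summable fun i => ∫ x, ‖‖f i x‖‖ ∂μ := by simpa only [norm_norm] using hs
  rw [(hasSum_integral_of_summable_integral_norm (fun i => (hf i).norm) hs').tsum_eq]
  refine integral_mono_ae (integrable_tsum_of_summable_integral_norm hf hs).norm
    (integrable_tsum_of_summable_integral_norm (fun i => (hf i).norm) hs') ?_
  filter_upwards [ae_summable_norm_of_summable_integral_norm hf hs] with x hx
  exact norm_tsum_le_tsum_norm hx

theorem tendsto_integral_norm_sum_sub_tsum (hf : ∀ i, Integrable (f i) μ)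
    (hs : Summable fun i => ∫ x, ‖f i x‖ ∂μ) :
    Tendsto (fun N => ∫ x, ‖∑ i ∈ Finset.range N, f i x - ∑' i, f i x‖ ∂μ) atTop (𝓝 0) := by
  refine squeeze_zero (fun _ => integral_nonneg fun _ => norm_nonneg _) (fun N => ?_)
    (tendsto_sum_nat_add fun i => ∫ x, ‖f i x‖ ∂μ)
  refine le_of_eq_of_le (integral_congr_ae ?_)
    (integral_norm_tsum_le (fun i => hf (i + N)) ((summable_nat_add_iff N).2 hs))
  filter_upwards [ae_summable_norm_of_summable_integral_norm hf hs] with x hx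
  simp only [← hx.of_norm.sum_add_tsum_nat_add N, sub_add_cancel_left, norm_neg]

end L1Series

section Mollification

open ContinuousLinearMap

variable {E F : Type*} [NormedAddCommGroup E] [NormedSpace ℝ E] [FiniteDimensional ℝ E]
  [MeasureSpace E] [NormedAddCommGroup F] [NormedSpace ℝ F]

/-- Mollification: the convolution of `u` with the bump function `b` normalised to have
integral one. -/
def mollify (b : ContDiffBump (0 : E)) (u : E → F) : E → F :=
  convolution (b.normed volume) u (lsmul ℝ ℝ) volume

variable (b : ContDiffBump (0 : E)) {f g : E → F} {u w : E → ℝ}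

theorem mollify_apply (f : E → F) (x : E) :
    mollify b f x = ∫ y, b.normed volume y • f (x - y) := rfl

theorem norm_mollify_le (f : E → F) (x : E) : ‖mollify b f x‖ ≤ mollify b (fun y => ‖f y‖) x := by
  rw [mollify_apply, mollify_apply]
  refine (norm_integral_le_integral_norm _).trans_eq (integral_congr_ae (ae_of_all _ fun y => ?_))
  simp only [norm_smul, Real.norm_of_nonneg (b.nonneg_normed y), smul_eq_mul]

theorem mollify_nonneg (hu : ∀ x, 0 ≤ u x) (x : E) : 0 ≤ mollify b u x :=
  integral_nonneg fun _ => mul_nonneg (b.nonneg_normed _) (hu _)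

variable [BorelSpace E] [(volume : Measure E).IsAddHaarMeasure]

theorem mollify_apply_swap (f : E → F) (x : E) :
    mollify b f x = ∫ y, b.normed volume (x - y) • f y := by
  rw [mollify, convolution_eq_swap]; rfl

theorem integrable_mollify (hf : Integrable f) : Integrable (mollify b f) :=
  b.integrable_normed.integrable_convolution _ hf

theorem convolutionExistsAt_mollify (hf : LocallyIntegrable f) (x : E) :
    ConvolutionExistsAt (b.normed volume) f x (lsmul ℝ ℝ) volume :=
  b.hasCompactSupport_normed.convolutionExists_left _ b.continuous_normed hf x

theorem integrable_normed_sub_smul (hf : LocallyIntegrable f) (x : E) :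
    Integrable fun y => b.normed volume (x - y) • f y :=
  (convolutionExistsAt_mollify b hf x).integrable_swap

theorem mollify_sub (hf : LocallyIntegrable f) (hg : LocallyIntegrable g) :
    mollify b (f - g) = mollify b f - mollify b g := by
  ext x
  simp only [Pi.sub_apply, mollify_apply_swap, smul_sub]
  exact integral_sub (integrable_normed_sub_smul b hf x) (integrable_normed_sub_smul b hg x)

theorem mollify_mono (hu : LocallyIntegrable u) (hw : LocallyIntegrable w) (h : ∀ x, u x ≤ w x)
    (x : E) : mollify b u x ≤ mollify b w x := by
  simp only [mollify_apply_swap]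
  exact integral_mono (integrable_normed_sub_smul b hu x) (integrable_normed_sub_smul b hw x)
    fun y => mul_le_mul_of_nonneg_left (h y) (b.nonneg_normed _)

theorem mollify_congr {x : E} (h : ∀ y ∈ ball x b.rOut, f y = g y) :
    mollify b f x = mollify b g x := by
  rw [mollify_apply_swap, mollify_apply_swap]
  refine integral_congr_ae (ae_of_all _ fun y => ?_)
  by_cases hy : y ∈ ball x b.rOut
  · simp only [h y hy]
  · have hy' : x - y ∉ Function.support (b.normed volume) := by
      rwa [b.support_normed_eq, mem_ball_zero_iff, ← dist_eq_norm, dist_comm]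
    simp only [Function.notMem_support.1 hy', zero_smul]

theorem integral_mollify [CompleteSpace F] (hf : Integrable f) : ∫ x, mollify b f x = ∫ x, f x := by
  rw [mollify, integral_convolution _ b.integrable_normed hf, b.integral_normed]
  simp only [lsmul_apply, one_smul]

theorem integral_norm_mollify_le (hf : Integrable f) :
    ∫ x, ‖mollify b f x‖ ≤ ∫ x, ‖f x‖ := by
  rw [← integral_mollify b hf.norm]
  exact integral_mono (integrable_mollify b hf).norm (integrable_mollify b hf.norm)
    (norm_mollify_le b f)

theorem mollify_eq_of_forall_mem_ball [CompleteSpace F] {x : E}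
    (h : ∀ y ∈ ball x b.rOut, f y = f x) :
    mollify b f x = f x :=
  b.normed_convolution_eq_right h

theorem setIntegral_norm_mollify_le (hf : Integrable f) {P Q : Set E} (hP : MeasurableSet P)
    (hQ : MeasurableSet Q) (hPQ : ∀ x ∈ P, ball x b.rOut ⊆ Q) :
    ∫ x in P, ‖mollify b f x‖ ≤ ∫ x in Q, ‖f x‖ := by
  have hQf : Integrable (Q.indicator fun y => ‖f y‖) := hf.norm.indicator hQ
  have hloc : ∀ x ∈ P, ‖mollify b f x‖ ≤ mollify b (Q.indicator fun y => ‖f y‖) x := fun x hx =>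
    (norm_mollify_le b f x).trans_eq <|
      mollify_congr b fun y hy => (indicator_of_mem (hPQ x hx hy) fun y => ‖f y‖).symm
  calc ∫ x in P, ‖mollify b f x‖ ≤ ∫ x in P, mollify b (Q.indicator fun y => ‖f y‖) x :=
        setIntegral_mono_on (integrable_mollify b hf).norm.restrict
          (integrable_mollify b hQf).restrict hP hloc
    _ ≤ ∫ x, mollify b (Q.indicator fun y => ‖f y‖) x :=
        setIntegral_le_integral (integrable_mollify b hQf)
          (ae_of_all _ (mollify_nonneg b fun x => indicator_nonneg (fun y _ => norm_nonneg _) x))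
    _ = ∫ x in Q, ‖f x‖ := by rw [integral_mollify b hQf, integral_indicator hQ]

theorem contDiff_mollify (hf : LocallyIntegrable f) : ContDiff ℝ 1 (mollify b f) :=
  b.hasCompactSupport_normed.contDiff_convolution_left _ (n := 1) b.contDiff_normed hf

theorem lipschitzWith_mollify {K : NNReal} (hu : LipschitzWith K u) :
    LipschitzWith K (mollify b u) := by
  refine LipschitzWith.of_dist_le_mul fun x x' => ?_
  have hconv := convolutionExistsAt_mollify b hu.continuous.locallyIntegrable
  calc dist (mollify b u x) (mollify b u x')
      = ‖∫ y, b.normed volume y * (u (x - y) - u (x' - y))‖ := by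
        simp only [mul_sub]
        rw [dist_eq_norm]
        exact congrArg norm (integral_sub (hconv x) (hconv x')).symm
    _ ≤ ∫ y, b.normed volume y * (K * dist x x') := by
        refine norm_integral_le_of_norm_le ((b.integrable_normed (μ := volume)).mul_const _)
          (ae_of_all _ fun y => ?_)
        rw [norm_mul, Real.norm_of_nonneg (b.nonneg_normed y), ← dist_eq_norm]
        refine mul_le_mul_of_nonneg_left ?_ (b.nonneg_normed y)
        simpa only [dist_sub_right] using hu.dist_le_mul (x - y) (x' - y)
    _ = K * dist x x' := by rw [integral_mul_const, b.integral_normed, one_mul]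

theorem fderiv_mollify (hu : LocallyIntegrable u) (x : E) :
    fderiv ℝ (mollify b u) x = ∫ y, u y • fderiv ℝ (b.normed volume) (x - y) := by
  have hflip : mollify b u = convolution u (b.normed volume) (lsmul ℝ ℝ) volume := by
    rw [mollify, ← convolution_flip]
    congr 1
    ext
    simp only [flip_apply, lsmul_apply, smul_eq_mul]
  rw [hflip]
  exact (b.hasCompactSupport_normed.hasFDerivAt_convolution_right (lsmul ℝ ℝ) hu
    b.contDiff_normed x).fderiv

theorem integrable_fderiv_normed : Integrable (fderiv ℝ (b.normed volume)) :=
  ((b.contDiff_normed (n := 1)).continuous_fderiv one_ne_zero).integrable_of_hasCompactSupport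
    (b.hasCompactSupport_normed.fderiv ℝ)

theorem integrable_fderiv_mollify (hu : Integrable u) : Integrable (fderiv ℝ (mollify b u)) := by
  rw [funext (fderiv_mollify b hu.locallyIntegrable)]
  exact hu.integrable_convolution (lsmul ℝ ℝ) (integrable_fderiv_normed b)

theorem norm_fderiv_mollify_le (hu : LocallyIntegrable u) (x : E) :
    ‖fderiv ℝ (mollify b u) x‖ ≤ ∫ y, |u y| * ‖fderiv ℝ (b.normed volume) (x - y)‖ := by
  rw [fderiv_mollify b hu]
  simpa only [norm_smul, Real.norm_eq_abs] using
    norm_integral_le_integral_norm fun y => u y • fderiv ℝ (b.normed volume) (x - y)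

theorem integral_norm_fderiv_mollify_le (hu : Integrable u) :
    ∫ x, ‖fderiv ℝ (mollify b u) x‖ ≤
      (∫ x, |u x|) * ∫ x, ‖fderiv ℝ (b.normed volume) x‖ := by
  refine (integral_mono (integrable_fderiv_mollify b hu).norm
    (hu.abs.integrable_convolution (mul ℝ ℝ) (integrable_fderiv_normed b).norm)
    (norm_fderiv_mollify_le b hu.locallyIntegrable)).trans_eq ?_
  exact integral_convolution (mul ℝ ℝ) hu.abs (integrable_fderiv_normed b).norm

theorem integral_norm_fderiv_mollify_sub_le (hu : Integrable u) (hw : Integrable w) :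
    ∫ x, ‖fderiv ℝ (mollify b u) x - fderiv ℝ (mollify b w) x‖ ≤
      (∫ x, |u x - w x|) * ∫ x, ‖fderiv ℝ (b.normed volume) x‖ := by
  have hsub : ∀ x, fderiv ℝ (mollify b (u - w)) x =
      fderiv ℝ (mollify b u) x - fderiv ℝ (mollify b w) x := fun x => by
    rw [mollify_sub b hu.locallyIntegrable hw.locallyIntegrable]
    exact fderiv_sub
      ((contDiff_mollify b hu.locallyIntegrable).differentiable one_ne_zero x)
      ((contDiff_mollify b hw.locallyIntegrable).differentiable one_ne_zero x)
  simpa only [hsub, Pi.sub_apply] using integral_norm_fderiv_mollify_le b (hu.sub hw)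

theorem exists_lipschitzWith_mollify (hu : Integrable u) : ∃ K, LipschitzWith K (mollify b u) := by
  obtain ⟨C, hC⟩ := (b.hasCompactSupport_normed.fderiv ℝ).exists_bound_of_continuous
    ((b.contDiff_normed (n := 1) (μ := volume)).continuous_fderiv one_ne_zero)
  have hbound : ∀ x, ‖fderiv ℝ (mollify b u) x‖ ≤ (∫ y, |u y|) * C := fun x => by
    rw [← integral_mul_const]
    exact (norm_fderiv_mollify_le b hu.locallyIntegrable x).trans <|
      integral_mono_of_nonneg (ae_of_all _ fun y => by positivity) (hu.abs.mul_const C)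
        (ae_of_all _ fun y => mul_le_mul_of_nonneg_left (hC _) (abs_nonneg _))
  have hdiff : Differentiable ℝ (mollify b u) :=
    (contDiff_mollify b hu.locallyIntegrable).differentiable one_ne_zero
  refine ⟨((∫ y, |u y|) * C).toNNReal, lipschitzWith_of_nnnorm_fderiv_le hdiff fun x => ?_⟩
  exact NNReal.le_toNNReal_of_coe_le (hbound x)

theorem mollify_le_mul_mollify {b b' : ContDiffBump (0 : E)} {K : ℝ} (hK : b'.rOut ≤ K * b.rIn)
    (hu : LocallyIntegrable u) (hu0 : ∀ x, 0 ≤ u x) {x y : E} (hxy : dist x y + b.rOut ≤ b'.rIn) :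
    mollify b u y ≤ K ^ Module.finrank ℝ E * mollify b' u x := by
  have hK0 : 0 < K := pos_of_mul_pos_left (b'.rOut_pos.trans_le hK) b.rIn_pos.le
  set I := volume.real (closedBall (0 : E) b.rIn) with hI
  have hIpos : 0 < I := ENNReal.toReal_pos (measure_closedBall_pos _ _ b.rIn_pos).ne'
    measure_closedBall_lt_top.ne
  have hvol : ∫ z, b' z ≤ K ^ Module.finrank ℝ E * I := by
    refine (b'.integral_le_measure_closedBall volume).trans ?_
    rw [hI, Measure.addHaar_real_closedBall' _ _ b.rIn_pos.le,
      Measure.addHaar_real_closedBall' _ _ b'.rOut_pos.le, ← mul_assoc, ← mul_pow]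
    gcongr
    exact b'.rOut_pos.le
  have hkernel : ∀ z, b.normed volume (y - z) ≤
      K ^ Module.finrank ℝ E * b'.normed volume (x - z) := fun z => by
    by_cases hz : y - z ∈ ball (0 : E) b.rOut
    · have hxz : x - z ∈ closedBall (0 : E) b'.rIn := by
        rw [mem_ball_zero_iff, ← dist_eq_norm] at hz
        rw [mem_closedBall_zero_iff, ← dist_eq_norm]
        linarith [dist_triangle x y z]
      rw [b'.normed_def, b'.one_of_mem_closedBall hxz]
      refine (b.normed_le_div_measure_closedBall_rIn volume _).trans ?_
      rwa [mul_one_div, div_le_div_iff₀ hIpos b'.integral_pos, one_mul]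
    · rw [← b.support_normed_eq (μ := volume), Function.notMem_support] at hz
      rw [hz]
      exact mul_nonneg (by positivity) (b'.nonneg_normed _)
  rw [mollify_apply_swap, mollify_apply_swap, ← integral_const_mul]
  refine integral_mono (integrable_normed_sub_smul b hu y)
    ((integrable_normed_sub_smul b' hu x).const_mul _) fun z => ?_
  simp only [smul_eq_mul, ← mul_assoc]
  exact mul_le_mul_of_nonneg_right (hkernel z) (hu0 z)

/-- A sequence of bump functions at `0` whose supports shrink to `{0}`. -/
def bumpSeq (E : Type*) [NormedAddCommGroup E] (i : ℕ) : ContDiffBump (0 : E) where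
  rIn := 1 / ((i : ℝ) + 1)
  rOut := 2 * (1 / ((i : ℝ) + 1))
  rIn_pos := by positivity
  rIn_lt_rOut := lt_mul_of_one_lt_left (by positivity) one_lt_two

theorem tendsto_bumpSeq_rOut (E : Type*) [NormedAddCommGroup E] :
    Tendsto (fun i => (bumpSeq E i).rOut) atTop (𝓝 0) := by
  simpa only [bumpSeq, mul_zero] using
    (tendsto_one_div_add_atTop_nhds_zero_nat (𝕜 := ℝ)).const_mul 2

theorem tendsto_mollify_bumpSeq_ae [CompleteSpace F] (hf : LocallyIntegrable f) :
    ∀ᵐ x, Tendsto (fun i => mollify (bumpSeq E i) f x) atTop (𝓝 (f x)) :=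
  ContDiffBump.ae_convolution_tendsto_right_of_locallyIntegrable (K := 2)
    (tendsto_bumpSeq_rOut E) (.of_forall fun _ => le_rfl) hf

theorem tendsto_integral_norm_mollify_bumpSeq_sub [CompleteSpace F] (hf : Integrable f) :
    Tendsto (fun i => ∫ x, ‖mollify (bumpSeq E i) f x - f x‖) atTop (𝓝 0) :=
  tendsto_integral_norm_sub_of_integral_norm_le (fun _ => integrable_mollify _ hf) hf
    (tendsto_mollify_bumpSeq_ae hf.locallyIntegrable) fun _ => integral_norm_mollify_le _ hf

end Mollification

section Sobolev

/-- `u` belongs to `W^{1,1}(ℝⁿ)` and `g` is its weak gradient. -/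
structure IsSobolev (u : En n → ℝ) (g : En n → (En n →L[ℝ] ℝ)) : Prop where
  integrable : Integrable u
  integrable_grad : Integrable g
  isWeakGrad : IsWeakGrad u g

/-- The `W^{1,1}` norm of a function `u` with weak gradient `g`. -/
def sobolevNorm (u : En n → ℝ) (g : En n → (En n →L[ℝ] ℝ)) : ℝ :=
  (∫ x, |u x|) + ∫ x, ‖g x‖

variable {u w φ : En n → ℝ} {g h : En n → (En n →L[ℝ] ℝ)}

theorem sobolevNorm_nonneg (u : En n → ℝ) (g : En n → (En n →L[ℝ] ℝ)) : 0 ≤ sobolevNorm u g :=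
  add_nonneg (integral_nonneg fun _ => abs_nonneg _) (integral_nonneg fun _ => norm_nonneg _)

theorem continuous_fderiv_apply (hφ : ContDiff ℝ 1 φ) (v : En n) :
    Continuous fun x => fderiv ℝ φ x v :=
  (hφ.continuous_fderiv one_ne_zero).clm_apply continuous_const

theorem hasCompactSupport_fderiv_apply (hc : HasCompactSupport φ) (v : En n) :
    HasCompactSupport fun x => fderiv ℝ φ x v :=
  (hc.fderiv ℝ).comp_left (g := fun L : En n →L[ℝ] ℝ => L v) rfl

theorem integrable_mul_fderiv_apply (hu : LocallyIntegrable u) (hφ : ContDiff ℝ 1 φ)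
    (hc : HasCompactSupport φ) (v : En n) : Integrable fun x => u x * fderiv ℝ φ x v := by
  simpa only [smul_eq_mul, mul_comm] using hu.integrable_smul_left_of_hasCompactSupport
    (continuous_fderiv_apply hφ v) (hasCompactSupport_fderiv_apply hc v)

theorem integrable_mul_apply (hg : Integrable g) (hφ : Continuous φ) (hc : HasCompactSupport φ)
    (v : En n) : Integrable fun x => φ x * g x v :=
  ((ContinuousLinearMap.apply ℝ ℝ v).integrable_comp hg).locallyIntegrable
    |>.integrable_smul_left_of_hasCompactSupport hφ hc

theorem IsWeakGrad.congr_ae (hug : IsWeakGrad u g) (huw : u =ᵐ[volume] w) : IsWeakGrad w g := by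
  intro φ hφ hc v
  rw [← hug φ hφ hc v]
  exact integral_congr_ae (huw.mono fun x hx => by simp only [hx])

theorem isWeakGrad_fderiv (hu : ContDiff ℝ 1 u) : IsWeakGrad u (fderiv ℝ u) := by
  intro φ hφ hc v
  have huφ : Integrable fun x => u x * φ x := by
    simpa only [smul_eq_mul, mul_comm] using
      hu.continuous.locallyIntegrable.integrable_smul_left_of_hasCompactSupport hφ.continuous hc
  have hφu : Integrable fun x => fderiv ℝ u x v * φ x := by
    simpa only [smul_eq_mul, mul_comm] using
      (continuous_fderiv_apply hu v).locallyIntegrable.integrable_smul_left_of_hasCompactSupport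
        hφ.continuous hc
  simpa only [mul_comm (φ _)] using integral_mul_fderiv_eq_neg_fderiv_mul_of_integrable hφu
    (integrable_mul_fderiv_apply hu.continuous.locallyIntegrable hφ hc v) huφ
    (fun x _ => hu.differentiable one_ne_zero x) (fun x _ => hφ.differentiable one_ne_zero x)

namespace IsSobolev

theorem congr_ae (hug : IsSobolev u g) (huw : u =ᵐ[volume] w) : IsSobolev w g :=
  ⟨hug.integrable.congr huw, hug.integrable_grad, hug.isWeakGrad.congr_ae huw⟩

protected theorem zero : IsSobolev (0 : En n → ℝ) 0 :=
  ⟨integrable_zero _ _ _, integrable_zero (En n) (En n →L[ℝ] ℝ) volume, fun φ _ _ v => by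
    simp only [Pi.zero_apply, zero_mul, zero_apply, mul_zero, integral_zero, neg_zero]⟩

protected theorem add (hug : IsSobolev u g) (hwh : IsSobolev w h) : IsSobolev (u + w) (g + h) := by
  refine ⟨hug.integrable.add hwh.integrable,
    Integrable.add (f := g) (g := h) hug.integrable_grad hwh.integrable_grad,
    fun φ hφ hc v => ?_⟩
  have hφg := integrable_mul_apply hug.integrable_grad hφ.continuous hc v
  have hφh := integrable_mul_apply hwh.integrable_grad hφ.continuous hc v
  simp only [Pi.add_apply, add_mul, add_apply, mul_add]
  rw [integral_add (integrable_mul_fderiv_apply hug.integrable.locallyIntegrable hφ hc v)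
    (integrable_mul_fderiv_apply hwh.integrable.locallyIntegrable hφ hc v),
    integral_add hφg hφh, neg_add, hug.isWeakGrad φ hφ hc v, hwh.isWeakGrad φ hφ hc v]

theorem const_smul (hug : IsSobolev u g) (a : ℝ) : IsSobolev (a • u) (a • g) := by
  refine ⟨hug.integrable.smul a, hug.integrable_grad.smul a, fun φ hφ hc v => ?_⟩
  simp only [Pi.smul_apply, smul_apply, smul_eq_mul, mul_assoc, mul_left_comm _ a]
  rw [integral_const_mul, integral_const_mul, hug.isWeakGrad φ hφ hc v, mul_neg]

protected theorem sub (hug : IsSobolev u g) (hwh : IsSobolev w h) : IsSobolev (u - w) (g - h) := by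
  rw [sub_eq_add_neg u, sub_eq_add_neg g, ← neg_one_smul ℝ w, ← neg_one_smul ℝ h]
  exact hug.add (hwh.const_smul (-1))

protected theorem sum {ι : Type*} {u : ι → En n → ℝ} {g : ι → En n → (En n →L[ℝ] ℝ)}
    (hug : ∀ i, IsSobolev (u i) (g i)) (s : Finset ι) :
    IsSobolev (fun x => ∑ i ∈ s, u i x) (fun x => ∑ i ∈ s, g i x) := by
  simp only [← Finset.sum_apply]
  classical
  induction s using Finset.induction_on with
  | empty => exact .zero
  | insert i s hi ih =>
    rw [Finset.sum_insert hi, Finset.sum_insert hi]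
    exact (hug i).add ih

theorem of_contDiff (hu : ContDiff ℝ 1 u) (hi : Integrable u) (hi' : Integrable (fderiv ℝ u)) :
    IsSobolev u (fderiv ℝ u) :=
  ⟨hi, hi', isWeakGrad_fderiv hu⟩

theorem of_tendsto {ι : Type*} {l : Filter ι} [l.NeBot] {U : ι → En n → ℝ}
    {G : ι → En n → (En n →L[ℝ] ℝ)} (hUG : ∀ i, IsSobolev (U i) (G i)) (hu : Integrable u)
    (hg : Integrable g) (hU : Tendsto (fun i => ∫ x, ‖U i x - u x‖) l (𝓝 0))
    (hG : Tendsto (fun i => ∫ x, ‖G i x - g x‖) l (𝓝 0)) : IsSobolev u g := by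
  refine ⟨hu, hg, fun φ hφ hc v => ?_⟩
  obtain ⟨C, hC⟩ := (hasCompactSupport_fderiv_apply hc v).exists_bound_of_continuous
    (continuous_fderiv_apply hφ v)
  obtain ⟨C', hC'⟩ := hc.exists_bound_of_continuous hφ.continuous
  have hleft : Tendsto (fun i => ∫ x, U i x * fderiv ℝ φ x v) l
      (𝓝 (∫ x, u x * fderiv ℝ φ x v)) := by
    simpa only [smul_eq_mul, mul_comm] using tendsto_integral_smul (fun i => (hUG i).integrable) hu
      hU (continuous_fderiv_apply hφ v).aestronglyMeasurable hC
  have happly : ∀ {k : En n → (En n →L[ℝ] ℝ)}, Integrable k →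
      (∫ x, φ x • k x) v = ∫ x, φ x * k x v := fun hk =>
    ContinuousLinearMap.integral_apply
      (hk.bdd_smul C' hφ.continuous.aestronglyMeasurable (ae_of_all _ hC')) v
  have hright := ((ContinuousLinearMap.apply ℝ ℝ v).continuous.tendsto _).comp
    (tendsto_integral_smul (fun i => (hUG i).integrable_grad) hg hG
      hφ.continuous.aestronglyMeasurable hC')
  refine tendsto_nhds_unique hleft ?_
  rw [← happly hg]
  refine hright.neg.congr fun i => ?_
  rw [(hUG i).isWeakGrad φ hφ hc v, ← happly (hUG i).integrable_grad]
  rfl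

protected theorem tsum {u : ℕ → En n → ℝ} {g : ℕ → En n → (En n →L[ℝ] ℝ)}
    (hug : ∀ i, IsSobolev (u i) (g i)) (hu : Summable fun i => ∫ x, ‖u i x‖)
    (hg : Summable fun i => ∫ x, ‖g i x‖) :
    IsSobolev (fun x => ∑' i, u i x) (fun x => ∑' i, g i x) :=
  of_tendsto (fun N => .sum hug (Finset.range N))
    (integrable_tsum_of_summable_integral_norm (fun i => (hug i).integrable) hu)
    (integrable_tsum_of_summable_integral_norm (fun i => (hug i).integrable_grad) hg)
    (tendsto_integral_norm_sum_sub_tsum (fun i => (hug i).integrable) hu)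
    (tendsto_integral_norm_sum_sub_tsum (fun i => (hug i).integrable_grad) hg)

protected theorem fderiv_mollify (hug : IsSobolev u g) (b : ContDiffBump (0 : En n)) (x : En n) :
    fderiv ℝ (mollify b u) x = mollify b g x := by
  ext v
  have hρ : ContDiff ℝ 1 fun y => b.normed volume (x - y) :=
    b.contDiff_normed.comp (contDiff_const.sub contDiff_id)
  have hρc : HasCompactSupport fun y => b.normed volume (x - y) :=
    b.hasCompactSupport_normed.comp_homeomorph (Homeomorph.subLeft x)
  have hρ' : ∀ y, fderiv ℝ (fun y => b.normed volume (x - y)) y v =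
      -fderiv ℝ (b.normed volume) (x - y) v := fun y => by
    have hcomp := (b.contDiff_normed (n := 1) (μ := volume)).differentiable one_ne_zero (x - y)
      |>.hasFDerivAt.comp y ((hasFDerivAt_id y).const_sub x)
    simpa using! congrArg (fun L : En n →L[ℝ] ℝ => L v) hcomp.fderiv
  have hparts := hug.isWeakGrad _ hρ hρc v
  simp only [hρ', mul_neg, integral_neg, neg_inj] at hparts
  have hint : Integrable fun y => u y • fderiv ℝ (b.normed volume) (x - y) :=
    hug.integrable.locallyIntegrable.integrable_smul_right_of_hasCompactSupport
      ((b.contDiff_normed.continuous_fderiv one_ne_zero).comp (continuous_const.sub continuous_id))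
      ((b.hasCompactSupport_normed.fderiv ℝ).comp_homeomorph (Homeomorph.subLeft x))
  calc fderiv ℝ (mollify b u) x v = ∫ y, u y * fderiv ℝ (b.normed volume) (x - y) v := by
        rw [fderiv_mollify b hug.integrable.locallyIntegrable,
          ContinuousLinearMap.integral_apply hint]
        rfl
    _ = ∫ y, b.normed volume (x - y) * g y v := hparts
    _ = mollify b g x v := by
        rw [mollify_apply_swap, ContinuousLinearMap.integral_apply
          (integrable_normed_sub_smul b hug.integrable_grad.locallyIntegrable x)]
        rfl

protected theorem mollify (hug : IsSobolev u g) (b : ContDiffBump (0 : En n)) :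
    IsSobolev (mollify b u) (mollify b g) := by
  rw [← funext (hug.fderiv_mollify b)]
  exact of_contDiff (contDiff_mollify b hug.integrable.locallyIntegrable)
    (integrable_mollify b hug.integrable) (integrable_fderiv_mollify b hug.integrable)

end IsSobolev

end Sobolev

section ChainRule

variable {u : En n → ℝ} {g : En n → (En n →L[ℝ] ℝ)}

theorem integrable_comp_of_lipschitzWith {f : ℝ → ℝ} {K : NNReal} (hu : Integrable u)
    (hf : LipschitzWith K f) (hf0 : f 0 = 0) : Integrable (f ∘ u) :=
  memLp_one_iff_integrable.1 (hf.comp_memLp hf0 (memLp_one_iff_integrable.2 hu))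

theorem integrable_comp_smul {ψ : ℝ → ℝ} {C : ℝ} (hu : Integrable u) (hg : Integrable g)
    (hψ : Continuous ψ) (hC : ∀ s, ‖ψ s‖ ≤ C) : Integrable fun x => ψ (u x) • g x :=
  hg.bdd_smul C (hψ.comp_aestronglyMeasurable hu.aestronglyMeasurable) (ae_of_all _ fun _ => hC _)

theorem IsSobolev.comp_contDiff_of_contDiff (hu : IsSobolev u (fderiv ℝ u)) (hu' : ContDiff ℝ 1 u)
    {f : ℝ → ℝ} {K : NNReal} (hf : ContDiff ℝ 1 f) (hf0 : f 0 = 0) (hK : ∀ s, ‖deriv f s‖₊ ≤ K) :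
    IsSobolev (f ∘ u) fun x => deriv f (u x) • fderiv ℝ u x := by
  have hgrad : fderiv ℝ (f ∘ u) = fun x => deriv f (u x) • fderiv ℝ u x := funext fun x =>
    ((hf.differentiable one_ne_zero _).hasDerivAt.comp_hasFDerivAt x
      (hu'.differentiable one_ne_zero x).hasFDerivAt).fderiv
  rw [← hgrad]
  refine .of_contDiff (hf.comp hu') (integrable_comp_of_lipschitzWith hu.integrable
    (lipschitzWith_of_nnnorm_deriv_le (hf.differentiable one_ne_zero) hK) hf0) ?_
  rw [hgrad]
  exact integrable_comp_smul hu.integrable hu.integrable_grad (hf.continuous_deriv le_rfl) hK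

theorem IsSobolev.comp_contDiff (hug : IsSobolev u g) {f : ℝ → ℝ} {K : NNReal}
    (hf : ContDiff ℝ 1 f) (hf0 : f 0 = 0) (hK : ∀ s, ‖deriv f s‖₊ ≤ K) :
    IsSobolev (f ∘ u) fun x => deriv f (u x) • g x := by
  have hLip : LipschitzWith K f :=
    lipschitzWith_of_nnnorm_deriv_le (hf.differentiable one_ne_zero) hK
  have hf' : Continuous (deriv f) := hf.continuous_deriv le_rfl
  have hmoll := fun i => hug.mollify (bumpSeq (En n) i)
  have hcomp := integrable_comp_of_lipschitzWith hug.integrable hLip hf0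
  have hsmooth : ∀ i, IsSobolev (f ∘ mollify (bumpSeq (En n) i) u)
      fun x => deriv f (mollify (bumpSeq (En n) i) u x) • mollify (bumpSeq (En n) i) g x :=
    fun i => by
      have hUG := hmoll i
      rw [← funext (hug.fderiv_mollify _)] at hUG
      simp only [← hug.fderiv_mollify]
      exact hUG.comp_contDiff_of_contDiff
        (contDiff_mollify _ hug.integrable.locallyIntegrable) hf hf0 hK
  refine .of_tendsto (l := atTop) hsmooth hcomp
    (integrable_comp_smul hug.integrable hug.integrable_grad hf' hK) ?_ ?_
  · refine squeeze_zero (fun _ => integral_nonneg fun _ => norm_nonneg _) (fun i => ?_) <| by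
      simpa only [mul_zero] using
        (tendsto_integral_norm_mollify_bumpSeq_sub hug.integrable).const_mul (K : ℝ)
    rw [← integral_const_mul]
    exact integral_mono ((hsmooth i).integrable.sub hcomp).norm
      (((hmoll i).integrable.sub hug.integrable).norm.const_mul _) fun x => hLip.norm_sub_le _ _
  · exact tendsto_integral_norm_smul_sub_smul (fun i => (hmoll i).integrable_grad)
      hug.integrable_grad (tendsto_integral_norm_mollify_bumpSeq_sub hug.integrable_grad)
      (fun i => hf'.comp_aestronglyMeasurable (hmoll i).integrable.aestronglyMeasurable)
      (fun i x => hK _) ((tendsto_mollify_bumpSeq_ae hug.integrable.locallyIntegrable).mono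
        fun x hx => (hf'.tendsto _).comp hx)

theorem IsSobolev.comp_of_tendsto (hug : IsSobolev u g) {f : ℕ → ℝ → ℝ} {f₀ ψ : ℝ → ℝ} {K : NNReal}
    (hf : ∀ i, ContDiff ℝ 1 (f i)) (hf0 : ∀ i, f i 0 = 0) (hK : ∀ i s, ‖deriv (f i) s‖₊ ≤ K)
    (hlim : ∀ s, Tendsto (fun i => f i s) atTop (𝓝 (f₀ s)))
    (hlim' : ∀ s, Tendsto (fun i => deriv (f i) s) atTop (𝓝 (ψ s))) :
    IsSobolev (f₀ ∘ u) fun x => ψ (u x) • g x := by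
  have happrox := fun i => hug.comp_contDiff (hf i) (hf0 i) (hK i)
  have hle : ∀ i x, ‖(f i ∘ u) x‖ ≤ K * ‖u x‖ := fun i x => by
    have hLip : LipschitzWith K (f i) :=
      lipschitzWith_of_nnnorm_deriv_le ((hf i).differentiable one_ne_zero) (hK i)
    simpa only [hf0, sub_zero] using! hLip.norm_sub_le (u x) 0
  have hle' : ∀ i x, ‖deriv (f i) (u x) • g x‖ ≤ K * ‖g x‖ := fun i x => by
    rw [norm_smul]
    exact mul_le_mul_of_nonneg_right (hK i _) (norm_nonneg _)
  have hm := fun i => (happrox i).integrable.aestronglyMeasurable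
  have hm' := fun i => (happrox i).integrable_grad.aestronglyMeasurable
  have hae : ∀ᵐ x, Tendsto (fun i => (f i ∘ u) x) atTop (𝓝 ((f₀ ∘ u) x)) :=
    ae_of_all _ fun x => hlim (u x)
  have hae' : ∀ᵐ x, Tendsto (fun i => deriv (f i) (u x) • g x) atTop (𝓝 (ψ (u x) • g x)) :=
    ae_of_all _ fun x => (hlim' (u x)).smul_const (g x)
  have hb := hug.integrable.norm.const_mul (K : ℝ)
  have hb' := hug.integrable_grad.norm.const_mul (K : ℝ)
  exact .of_tendsto (l := atTop) happrox (integrable_of_tendsto_of_norm_le hm hb hle hae)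
    (integrable_of_tendsto_of_norm_le hm' hb' hle' hae')
    (tendsto_integral_norm_sub_of_norm_le hm hb hle hae)
    (tendsto_integral_norm_sub_of_norm_le hm' hb' hle' hae')

end ChainRule

section Heaviside

/-- The Heaviside function, with the symmetric value `1 / 2` at `0` (where `s / |s|` is
`0 / 0 = 0`). It is the derivative of the positive part in the chain rule. -/
def heaviside (s : ℝ) : ℝ := (1 + s / |s|) / 2

theorem heaviside_of_neg {s : ℝ} (hs : s < 0) : heaviside s = 0 := by
  rw [heaviside, abs_of_neg hs, div_neg_self hs.ne, add_neg_cancel, zero_div]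

theorem heaviside_nonneg (s : ℝ) : 0 ≤ heaviside s := by
  have h : -1 ≤ s / |s| := by
    rw [neg_le, ← neg_div]
    exact div_le_one_of_le₀ (neg_le_abs s) (abs_nonneg s)
  unfold heaviside
  linarith

theorem heaviside_le_one (s : ℝ) : heaviside s ≤ 1 := by
  have h := div_le_one_of_le₀ (le_abs_self s) (abs_nonneg s)
  unfold heaviside
  linarith

/-- A smooth approximation, of accuracy `e`, of the positive part. -/
def smoothPos (e s : ℝ) : ℝ := (s + √(s ^ 2 + e ^ 2)) / 2

theorem tendsto_smoothPos (s : ℝ) : Tendsto (fun e => smoothPos e s) (𝓝 0) (𝓝 (max s 0)) := by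
  have hcont : Continuous fun e => smoothPos e s := by unfold smoothPos; fun_prop
  convert hcont.tendsto 0 using 2
  rw [smoothPos, zero_pow two_ne_zero, add_zero, Real.sqrt_sq_eq_abs]
  rcases le_total s 0 with hs | hs
  · rw [max_eq_right hs, abs_of_nonpos hs, add_neg_cancel, zero_div]
  · rw [max_eq_left hs, abs_of_nonneg hs, add_self_div_two]

theorem contDiff_smoothPos {e : ℝ} (he : e ≠ 0) : ContDiff ℝ 1 (smoothPos e) :=
  (contDiff_id.add (((contDiff_id.pow 2).add contDiff_const).sqrt
    fun s => by positivity)).div_const 2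

theorem deriv_smoothPos {e : ℝ} (he : e ≠ 0) (s : ℝ) :
    deriv (smoothPos e) s = (1 + s / √(s ^ 2 + e ^ 2)) / 2 := by
  have hsqrt : HasDerivAt (fun s => √(s ^ 2 + e ^ 2)) (s / √(s ^ 2 + e ^ 2)) s := by
    convert ((hasDerivAt_pow 2 s).add_const (e ^ 2)).sqrt (by positivity) using 1
    rw [pow_one, Nat.cast_ofNat, mul_div_mul_left _ _ two_ne_zero]
  exact (((hasDerivAt_id s).add hsqrt).div_const 2).deriv

theorem nnnorm_deriv_smoothPos_le {e : ℝ} (he : e ≠ 0) (s : ℝ) :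
    ‖deriv (smoothPos e) s‖₊ ≤ 1 := by
  have hle : |s / √(s ^ 2 + e ^ 2)| ≤ 1 := by
    rw [abs_div, abs_of_nonneg (Real.sqrt_nonneg _)]
    exact div_le_one_of_le₀ (Real.abs_le_sqrt (by nlinarith [sq_nonneg e])) (Real.sqrt_nonneg _)
  rw [← NNReal.coe_le_coe, coe_nnnorm, Real.norm_eq_abs, deriv_smoothPos he, NNReal.coe_one, abs_le]
  constructor <;> linarith [(abs_le.1 hle).1, (abs_le.1 hle).2]

theorem tendsto_deriv_smoothPos (s : ℝ) :
    Tendsto (fun e => deriv (smoothPos e) s) (𝓝[≠] 0) (𝓝 (heaviside s)) := by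
  refine Tendsto.congr' (eventually_nhdsWithin_of_forall fun e he => (deriv_smoothPos he s).symm) ?_
  rcases eq_or_ne s 0 with rfl | hs
  · simp only [zero_div, heaviside]
    exact tendsto_const_nhds
  · have hsqrt : Tendsto (fun e => √(s ^ 2 + e ^ 2)) (𝓝[≠] 0) (𝓝 |s|) := by
      have hcont : Continuous fun e => √(s ^ 2 + e ^ 2) := by fun_prop
      simpa [Real.sqrt_sq_eq_abs] using (hcont.tendsto 0).mono_left nhdsWithin_le_nhds
    exact ((tendsto_const_nhds.div hsqrt (abs_ne_zero.2 hs)).const_add 1).div_const 2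

end Heaviside

section Truncation

variable {u w : En n → ℝ} {g h : En n → (En n →L[ℝ] ℝ)} {c : ℝ}

theorem norm_heaviside_smul_le {F : Type*} [NormedAddCommGroup F] [NormedSpace ℝ F] (s : ℝ)
    (v : F) : ‖heaviside s • v‖ ≤ ‖v‖ := by
  rw [norm_smul, Real.norm_of_nonneg (heaviside_nonneg s)]
  exact mul_le_of_le_one_left (norm_nonneg _) (heaviside_le_one s)

theorem norm_heaviside_smul_add_norm_one_sub_heaviside_smul {F : Type*} [NormedAddCommGroup F]
    [NormedSpace ℝ F] (s : ℝ) (v : F) :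
    ‖heaviside s • v‖ + ‖(1 - heaviside s) • v‖ = ‖v‖ := by
  rw [norm_smul, norm_smul, Real.norm_of_nonneg (heaviside_nonneg s),
    Real.norm_of_nonneg (sub_nonneg.2 (heaviside_le_one s)), ← add_mul, add_sub_cancel, one_mul]

theorem sub_max_sub_zero (a c : ℝ) : a - max (a - c) 0 = min a c := by
  rcases le_total a c with h | h <;> simp [h]

namespace IsSobolev

theorem above (hug : IsSobolev u g) (hc : 0 ≤ c) :
    IsSobolev (fun x => max (u x - c) 0) fun x => heaviside (u x - c) • g x := by
  have hne : ∀ i : ℕ, 1 / ((i : ℝ) + 1) ≠ 0 := fun i => by positivity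
  have hseq : Tendsto (fun i : ℕ => 1 / ((i : ℝ) + 1)) atTop (𝓝[≠] 0) :=
    tendsto_nhdsWithin_iff.2 ⟨tendsto_one_div_add_atTop_nhds_zero_nat, .of_forall hne⟩
  have hderiv : ∀ (i : ℕ) (s : ℝ), deriv (fun s => smoothPos (1 / ((i : ℝ) + 1)) (s - c) -
      smoothPos (1 / ((i : ℝ) + 1)) (-c)) s = deriv (smoothPos (1 / ((i : ℝ) + 1))) (s - c) :=
    fun i s => by rw [deriv_sub_const, deriv_comp_sub_const]
  have hpos : ∀ s, Tendsto (fun i : ℕ => smoothPos (1 / ((i : ℝ) + 1)) s) atTop (𝓝 (max s 0)) :=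
    fun s => (tendsto_smoothPos s).comp tendsto_one_div_add_atTop_nhds_zero_nat
  refine hug.comp_of_tendsto (f := fun i s => smoothPos (1 / ((i : ℝ) + 1)) (s - c) -
    smoothPos (1 / ((i : ℝ) + 1)) (-c)) (f₀ := fun s => max (s - c) 0)
    (ψ := fun s => heaviside (s - c)) (K := 1) (fun i => ?_) (fun i => ?_) (fun i s => ?_)
    (fun s => ?_) fun s => ?_
  · exact ((contDiff_smoothPos (hne i)).comp (contDiff_id.sub contDiff_const)).sub contDiff_const
  · simp only [zero_sub, sub_self]
  · exact hderiv i s ▸ nnnorm_deriv_smoothPos_le (hne i) _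
  · simpa only [max_eq_right (neg_nonpos.2 hc), sub_zero] using (hpos (s - c)).sub (hpos (-c))
  · simpa only [hderiv] using! (tendsto_deriv_smoothPos (s - c)).comp hseq

theorem below (hug : IsSobolev u g) (hc : 0 ≤ c) :
    IsSobolev (fun x => min (u x) c) fun x => (1 - heaviside (u x - c)) • g x := by
  convert hug.sub (hug.above hc) using 1
  · exact funext fun x => (sub_max_sub_zero _ _).symm
  · ext1 x
    simp only [Pi.sub_apply]
    module

theorem sobolevNorm_above_add_below (hug : IsSobolev u g) (hc : 0 ≤ c) (hu : ∀ x, 0 ≤ u x) :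
    sobolevNorm (fun x => max (u x - c) 0) (fun x => heaviside (u x - c) • g x) +
      sobolevNorm (fun x => min (u x) c) (fun x => (1 - heaviside (u x - c)) • g x) =
      sobolevNorm u g := by
  have ha := hug.above hc
  have hb := hug.below hc
  unfold sobolevNorm
  rw [add_add_add_comm, ← integral_add ha.integrable.abs hb.integrable.abs,
    ← integral_add ha.integrable_grad.norm hb.integrable_grad.norm]
  congr 2 with x
  · rw [abs_of_nonneg (le_max_right _ _), abs_of_nonneg (le_min (hu x) hc), abs_of_nonneg (hu x),
      ← sub_max_sub_zero, add_sub_cancel]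
  · exact norm_heaviside_smul_add_norm_one_sub_heaviside_smul (u x - c) (g x)

protected theorem max (hug : IsSobolev u g) (hwh : IsSobolev w h) :
    IsSobolev (fun x => max (u x) (w x))
      fun x => heaviside (u x - w x) • g x + (1 - heaviside (u x - w x)) • h x := by
  convert hwh.add ((hug.sub hwh).above le_rfl) using 1
  · ext x
    simp only [Pi.add_apply, Pi.sub_apply, sub_zero, ← max_add_add_left, add_sub_cancel, add_zero]
  · ext1 x
    simp only [Pi.add_apply, Pi.sub_apply, sub_zero]
    module

protected theorem min (hug : IsSobolev u g) (hwh : IsSobolev w h) :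
    IsSobolev (fun x => min (u x) (w x))
      fun x => (1 - heaviside (u x - w x)) • g x + heaviside (u x - w x) • h x := by
  convert (hug.add hwh).sub (hug.max hwh) using 1
  · ext x
    exact eq_sub_of_add_eq (min_add_max _ _)
  · ext1 x
    simp only [Pi.add_apply, Pi.sub_apply]
    module

theorem sobolevNorm_max_add_min_le (hug : IsSobolev u g) (hwh : IsSobolev w h) :
    sobolevNorm (fun x => max (u x) (w x))
        (fun x => heaviside (u x - w x) • g x + (1 - heaviside (u x - w x)) • h x) +
      sobolevNorm (fun x => min (u x) (w x))
        (fun x => (1 - heaviside (u x - w x)) • g x + heaviside (u x - w x) • h x) ≤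
      sobolevNorm u g + sobolevNorm w h := by
  have hM := hug.max hwh
  have hm := hug.min hwh
  unfold sobolevNorm
  rw [add_add_add_comm, add_add_add_comm (∫ x, |u x|),
    ← integral_add hM.integrable.abs hm.integrable.abs,
    ← integral_add hM.integrable_grad.norm hm.integrable_grad.norm,
    ← integral_add hug.integrable.abs hwh.integrable.abs,
    ← integral_add hug.integrable_grad.norm hwh.integrable_grad.norm]
  refine add_le_add (le_of_eq (congrArg _ (funext fun x => ?_)))
    (integral_mono (hM.integrable_grad.norm.add hm.integrable_grad.norm)
      (hug.integrable_grad.norm.add hwh.integrable_grad.norm) fun x => ?_)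
  · rcases le_total (u x) (w x) with hx | hx
    · rw [max_eq_right hx, min_eq_left hx, add_comm]
    · rw [max_eq_left hx, min_eq_right hx]
  · set s := u x - w x
    have hg := norm_heaviside_smul_add_norm_one_sub_heaviside_smul s (g x)
    have hh := norm_heaviside_smul_add_norm_one_sub_heaviside_smul s (h x)
    linarith [norm_add_le (heaviside s • g x) ((1 - heaviside s) • h x),
      norm_add_le ((1 - heaviside s) • g x) (heaviside s • h x)]

end IsSobolev

end Truncation

section Product

variable {u w ζ : En n → ℝ} {g h : En n → (En n →L[ℝ] ℝ)}

theorem sobolevNorm_smul (u : En n → ℝ) (g : En n → (En n →L[ℝ] ℝ)) {a : ℝ} (ha : 0 ≤ a) :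
    sobolevNorm (a • u) (a • g) = a * sobolevNorm u g := by
  simp only [sobolevNorm, Pi.smul_apply, smul_eq_mul, abs_mul, norm_smul, Real.norm_eq_abs,
    integral_const_mul, mul_add, abs_of_nonneg ha]

theorem IsSobolev.sobolevNorm_mono (hug : IsSobolev u g) (hu : ∀ x, |w x| ≤ |u x|)
    (hg : ∀ x, ‖h x‖ ≤ ‖g x‖) : sobolevNorm w h ≤ sobolevNorm u g :=
  add_le_add
    (integral_mono_of_nonneg (ae_of_all _ fun _ => abs_nonneg _) hug.integrable.abs
      (ae_of_all _ hu))
    (integral_mono_of_nonneg (ae_of_all _ fun _ => norm_nonneg _) hug.integrable_grad.norm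
      (ae_of_all _ hg))

theorem IsWeakGrad.mul_contDiff (hug : IsWeakGrad u g) (hu : LocallyIntegrable u)
    (hg : Integrable g) (hζ : ContDiff ℝ 1 ζ) :
    IsWeakGrad (fun x => ζ x * u x) (fun x => ζ x • g x + u x • fderiv ℝ ζ x) := by
  intro φ hφ hc v
  have huζ : Integrable fun x => u x * (φ x * fderiv ℝ ζ x v) := by
    simpa only [smul_eq_mul, Pi.mul_apply, mul_comm (u _)] using
      hu.integrable_smul_left_of_hasCompactSupport
        (hφ.continuous.mul (continuous_fderiv_apply hζ v)) hc.mul_right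
  have huφ : Integrable fun x => u x * (ζ x * fderiv ℝ φ x v) := by
    simpa only [smul_eq_mul, Pi.mul_apply, mul_comm (u _)] using
      hu.integrable_smul_left_of_hasCompactSupport
        (hζ.continuous.mul (continuous_fderiv_apply hφ v))
        (hasCompactSupport_fderiv_apply hc v).mul_left
  have hgφ : Integrable fun x => ζ x * φ x * g x v :=
    integrable_mul_apply hg (hζ.continuous.mul hφ.continuous) hc.mul_left v
  have hζφ : ∀ x, u x * fderiv ℝ (fun x => ζ x * φ x) x v =
      u x * (ζ x * fderiv ℝ φ x v) + u x * (φ x * fderiv ℝ ζ x v) := fun x => by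
    rw [fderiv_fun_mul (hζ.differentiable one_ne_zero x) (hφ.differentiable one_ne_zero x)]
    simp only [add_apply, smul_apply, smul_eq_mul, mul_add]
  calc ∫ x, ζ x * u x * fderiv ℝ φ x v
      = ∫ x, (u x * fderiv ℝ (fun x => ζ x * φ x) x v - u x * (φ x * fderiv ℝ ζ x v)) :=
        integral_congr_ae (ae_of_all _ fun x => by simp only [hζφ]; ring)
    _ = -(∫ x, ζ x * φ x * g x v) - ∫ x, u x * (φ x * fderiv ℝ ζ x v) := by
        rw [← hug _ (hζ.mul hφ) hc.mul_left v, ← integral_sub _ huζ]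
        simp only [hζφ]
        exact huφ.add huζ
    _ = -∫ x, φ x * (ζ x • g x + u x • fderiv ℝ ζ x) v := by
        rw [← neg_add', ← integral_add hgφ huζ]
        congr 2 with x
        simp only [add_apply, smul_apply, smul_eq_mul]
        ring

theorem IsSobolev.mul_contDiff (hug : IsSobolev u g) (hζ : ContDiff ℝ 1 ζ) {C K : ℝ}
    (hC : ∀ x, |ζ x| ≤ C) (hK : ∀ x, ‖fderiv ℝ ζ x‖ ≤ K) :
    IsSobolev (fun x => ζ x * u x) (fun x => ζ x • g x + u x • fderiv ℝ ζ x) where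
  integrable := hug.integrable.bdd_mul hζ.continuous.aestronglyMeasurable (ae_of_all _ hC)
  integrable_grad :=
    (hug.integrable_grad.bdd_smul C hζ.continuous.aestronglyMeasurable (ae_of_all _ hC)).add
      (hug.integrable.smul_bdd K (hζ.continuous_fderiv one_ne_zero).aestronglyMeasurable
        (ae_of_all _ hK))
  isWeakGrad :=
    hug.isWeakGrad.mul_contDiff hug.integrable.locallyIntegrable hug.integrable_grad hζ

end Product

section Measurability

variable {u φ : En n → ℝ} {g : En n → (En n →L[ℝ] ℝ)} {v : En n}

theorem aestronglyMeasurable_of_forall_apply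
    (h : ∀ v, AEStronglyMeasurable fun x => g x v) : AEStronglyMeasurable g := by
  have hsum : g = fun x => ∑ i, g x (EuclideanSpace.single i 1) •
      (EuclideanSpace.proj i : En n →L[ℝ] ℝ) := by
    funext x
    refine ContinuousLinearMap.coe_injective
      ((EuclideanSpace.basisFun (Fin n) ℝ).toBasis.ext fun j => ?_)
    simp
  rw [hsum]
  exact Finset.aestronglyMeasurable_fun_sum _ fun i _ => (h _).smul_const _

/-- The directions in which a field of linear forms is measurable. The weak gradients in the
definition of `cap1` need not be measurable in every direction: where `φ x * g x v` is not
integrable, its integral is `0`. -/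
def measurableDirections (g : En n → (En n →L[ℝ] ℝ)) : Submodule ℝ (En n) where
  carrier := {v | AEStronglyMeasurable fun x => g x v}
  add_mem' {v w} hv hw := by
    simp only [mem_ofPred_eq, map_add]
    exact AEStronglyMeasurable.add hv hw
  zero_mem' := by simpa only [mem_ofPred_eq, map_zero] using aestronglyMeasurable_const
  smul_mem' a v hv := by
    simp only [mem_ofPred_eq, map_smul]
    exact AEStronglyMeasurable.const_smul hv a

theorem exists_not_integrable_mul_apply (hv : v ∉ measurableDirections g) :
    ∃ φ : En n → ℝ, ContDiff ℝ 1 φ ∧ HasCompactSupport φ ∧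
      ¬ Integrable fun x => φ x * g x v := by
  by_contra! hint
  let b (k : ℕ) : ContDiffBump (0 : En n) := ⟨k + 1, k + 2, by positivity, by linarith⟩
  refine hv (aestronglyMeasurable_of_tendsto_ae (u := atTop) (f := fun k x => b k x * g x v)
    (fun k => (hint _ (b k).contDiff (b k).hasCompactSupport).aestronglyMeasurable)
    (ae_of_all _ fun x => tendsto_const_nhds.congr' ?_))
  filter_upwards [eventually_ge_atTop ⌈‖x‖⌉₊] with k hk
  have hx : x ∈ closedBall 0 (b k).rIn :=
    mem_closedBall_zero_iff.2 ((Nat.ceil_le.1 hk).trans (by simp [b]))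
  rw [(b k).one_of_mem_closedBall hx, one_mul]

theorem IsWeakGrad.integral_mul_fderiv_eq_zero (hug : IsWeakGrad u g) (hu : Integrable u)
    (hv : v ∉ measurableDirections g) (hφ : ContDiff ℝ 1 φ) (hc : HasCompactSupport φ) :
    ∫ x, u x * fderiv ℝ φ x v = 0 := by
  by_cases hi : Integrable fun x => φ x * g x v
  · obtain ⟨ψ, hψ, hψc, hψi⟩ := exists_not_integrable_mul_apply hv
    have hψ0 : ∫ x, u x * fderiv ℝ ψ x v = 0 := by
      rw [hug ψ hψ hψc v, integral_undef hψi, neg_zero]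
    have hsum0 : ∫ x, u x * fderiv ℝ (φ + ψ) x v = 0 := by
      rw [hug (φ + ψ) (hφ.add hψ) (hc.add hψc) v, integral_undef, neg_zero]
      refine fun hsum => hψi ((hsum.sub hi).congr (ae_of_all _ fun x => ?_))
      simp only [Pi.sub_apply, Pi.add_apply]
      ring
    have hadd : ∀ x, u x * fderiv ℝ (φ + ψ) x v =
        u x * fderiv ℝ φ x v + u x * fderiv ℝ ψ x v := fun x => by
      rw [fderiv_add (hφ.differentiable one_ne_zero x) (hψ.differentiable one_ne_zero x),
        add_apply, mul_add]
    simpa only [hadd, hψ0, add_zero, integral_add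
      (integrable_mul_fderiv_apply hu.locallyIntegrable hφ hc v)
      (integrable_mul_fderiv_apply hu.locallyIntegrable hψ hψc v)] using hsum0
  · rw [hug φ hφ hc v, integral_undef hi, neg_zero]

theorem IsWeakGrad.exists_isSobolev (hug : IsWeakGrad u g) (hu : Integrable u)
    (hg : Integrable fun x => ‖g x‖) :
    ∃ g' : En n → (En n →L[ℝ] ℝ), IsSobolev u g' ∧ ∀ x, ‖g' x‖ ≤ ‖g x‖ := by
  set L := measurableDirections g
  have hle : ∀ x, ‖(g x).comp L.starProjection‖ ≤ ‖g x‖ := fun x =>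
    ((g x).opNorm_comp_le _).trans
      (mul_le_of_le_one_right (norm_nonneg _) L.starProjection_norm_le)
  have hm : AEStronglyMeasurable fun x => (g x).comp L.starProjection :=
    aestronglyMeasurable_of_forall_apply L.starProjection_apply_mem
  refine ⟨fun x => (g x).comp L.starProjection, ⟨hu, hg.mono' hm (ae_of_all _ hle), ?_⟩, hle⟩
  intro φ hφ hc v
  have horth : ∫ x, u x * fderiv ℝ φ x (v - L.starProjection v) = 0 := by
    by_cases hv : v - L.starProjection v ∈ L
    · have hv0 : v - L.starProjection v = 0 := inner_self_eq_zero.1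
        (L.inner_right_of_mem_orthogonal hv (L.sub_starProjection_mem_orthogonal v))
      simp only [hv0, map_zero, mul_zero, integral_zero]
    · exact hug.integral_mul_fderiv_eq_zero hu hv hφ hc
  simp only [map_sub, mul_sub] at horth
  rw [integral_sub (integrable_mul_fderiv_apply hu.locallyIntegrable hφ hc _)
    (integrable_mul_fderiv_apply hu.locallyIntegrable hφ hc _)] at horth
  exact (sub_eq_zero.1 horth).trans (hug φ hφ hc _)

end Measurability

section Capacity

variable {A B V : Set (En n)} {u w : En n → ℝ} {g h : En n → (En n →L[ℝ] ℝ)}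

theorem IsSobolev.cap1_le (hug : IsSobolev u g) (hV : IsOpen V) (hA : A ⊆ V)
    (hu : ∀ᵐ x, x ∈ V → 1 ≤ u x) : cap1 A ≤ ENNReal.ofReal (sobolevNorm u g) := by
  classical
  set w : En n → ℝ := V.piecewise (fun x => max (u x) 1) u with hw
  have huw : u =ᵐ[volume] w := by
    filter_upwards [hu] with x hx
    by_cases hxV : x ∈ V
    · simp only [hw, hxV, piecewise_eq_of_mem, max_eq_left (hx hxV)]
    · simp only [hw, hxV, not_false_eq_true, piecewise_eq_of_notMem]
  have hwg := hug.congr_ae huw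
  refine sInf_le ⟨w, g, hwg.integrable, hwg.integrable_grad.norm, hwg.isWeakGrad,
    ⟨V, hV, hA, fun x hx => ?_⟩, ?_⟩
  · simp only [hw, hx, piecewise_eq_of_mem, le_max_right]
  · have habs : ∫ x, |u x| = ∫ x, |w x| := integral_congr_ae (huw.fun_comp abs)
    rw [sobolevNorm, habs]

theorem IsSobolev.cap1_le_div (hug : IsSobolev u g) (hV : IsOpen V) (hA : A ⊆ V) {a : ℝ}
    (ha : 0 < a) (hu : ∀ x ∈ V, a ≤ u x) : cap1 A ≤ ENNReal.ofReal (sobolevNorm u g / a) := by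
  have hle := (hug.const_smul a⁻¹).cap1_le hV hA (ae_of_all _ fun x hx =>
    (le_inv_mul_iff₀ ha).2 ((mul_one a).trans_le (hu x hx)))
  rwa [sobolevNorm_smul u g (inv_nonneg.2 ha.le), inv_mul_eq_div] at hle

theorem IsSobolev.mul_toReal_cap1_le (hug : IsSobolev u g) (hV : IsOpen V) (hA : A ⊆ V) {a : ℝ}
    (ha : 0 < a) (hu : ∀ x ∈ V, a ≤ u x) : a * (cap1 A).toReal ≤ sobolevNorm u g :=
  (le_div_iff₀' ha).1 (ENNReal.toReal_le_of_le_ofReal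
    (div_nonneg (sobolevNorm_nonneg u g) ha.le) (hug.cap1_le_div hV hA ha hu))

/-- A test function `u` for `cap1 A` with weak gradient `g`, normalized so that `0 ≤ u ≤ 1`. -/
structure IsCapTest (A : Set (En n)) (u : En n → ℝ) (g : En n → (En n →L[ℝ] ℝ)) : Prop
    extends IsSobolev u g where
  nonneg : ∀ x, 0 ≤ u x
  le_one : ∀ x, u x ≤ 1
  eq_one : ∃ V, IsOpen V ∧ A ⊆ V ∧ ∀ x ∈ V, u x = 1

theorem IsSobolev.exists_isCapTest (hug : IsSobolev u g) (hV : IsOpen V) (hA : A ⊆ V)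
    (hu : ∀ x ∈ V, 1 ≤ u x) : ∃ w h, IsCapTest A w h ∧ sobolevNorm w h ≤ sobolevNorm u g := by
  have hpos := hug.above le_rfl
  have hcut := hpos.below zero_le_one
  refine ⟨_, _, ⟨hcut, fun x => le_min (le_max_right _ _) zero_le_one, fun x => min_le_right _ _,
    V, hV, hA, fun x hx => min_eq_right (le_max_of_le_left ?_)⟩, ?_⟩
  · simpa only [sub_zero] using hu x hx
  · refine (hpos.sobolevNorm_mono (fun x => ?_) fun x => ?_).trans
      (hug.sobolevNorm_mono (fun x => ?_) fun x => ?_)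
    · rw [abs_of_nonneg (le_min (le_max_right _ _) zero_le_one), abs_of_nonneg (le_max_right _ _)]
      exact min_le_left _ _
    · rw [← norm_heaviside_smul_add_norm_one_sub_heaviside_smul
        (max (u x - 0) 0 - 1) (heaviside (u x - 0) • g x)]
      exact le_add_of_nonneg_left (norm_nonneg _)
    · rw [abs_of_nonneg (le_max_right _ _), sub_zero]
      exact max_le (le_abs_self _) (abs_nonneg _)
    · exact norm_heaviside_smul_le (u x - 0) (g x)

theorem exists_isCapTest (hA : cap1 A ≠ ∞) {ε : ℝ} (hε : 0 < ε) :
    ∃ u g, IsCapTest A u g ∧ sobolevNorm u g ≤ (cap1 A).toReal + ε := by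
  have hlt : cap1 A < cap1 A + ENNReal.ofReal ε :=
    ENNReal.lt_add_right hA (ENNReal.ofReal_pos.2 hε).ne'
  obtain ⟨_, ⟨u, g₀, hu, hg₀, hug₀, ⟨V, hV, hAV, hu1⟩, rfl⟩, hlt⟩ := sInf_lt_iff.1 hlt
  obtain ⟨g, hug, hgg₀⟩ := hug₀.exists_isSobolev hu hg₀
  obtain ⟨w, h, hwh, hle⟩ := hug.exists_isCapTest hV hAV hu1
  refine ⟨w, h, hwh, ?_⟩
  calc sobolevNorm w h ≤ sobolevNorm u g := hle
    _ ≤ (∫ x, |u x|) + ∫ x, ‖g₀ x‖ :=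
        add_le_add_right (integral_mono hug.integrable_grad.norm hg₀ hgg₀) _
    _ ≤ (cap1 A + ENNReal.ofReal ε).toReal :=
        (ENNReal.ofReal_le_iff_le_toReal (ENNReal.add_ne_top.2 ⟨hA, ENNReal.ofReal_ne_top⟩)).1
          hlt.le
    _ = (cap1 A).toReal + ε := by
        rw [ENNReal.toReal_add hA ENNReal.ofReal_ne_top, ENNReal.toReal_ofReal hε.le]

namespace IsCapTest

theorem mono (hug : IsCapTest A u g) (hBA : B ⊆ A) : IsCapTest B u g := by
  obtain ⟨V, hV, hA, hu⟩ := hug.eq_one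
  exact ⟨hug.toIsSobolev, hug.nonneg, hug.le_one, V, hV, hBA.trans hA, hu⟩

theorem toReal_cap1_le (hug : IsCapTest A u g) : (cap1 A).toReal ≤ sobolevNorm u g := by
  obtain ⟨V, hV, hA, hu⟩ := hug.eq_one
  simpa only [one_mul] using
    hug.mul_toReal_cap1_le hV hA one_pos fun x hx => (hu x hx).ge

protected theorem max (hug : IsCapTest A u g) (hwh : IsCapTest B w h) :
    IsCapTest (A ∪ B) (fun x => max (u x) (w x))
      fun x => heaviside (u x - w x) • g x + (1 - heaviside (u x - w x)) • h x := by
  obtain ⟨V, hV, hA, hu⟩ := hug.eq_one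
  obtain ⟨W, hW, hB, hw⟩ := hwh.eq_one
  refine ⟨hug.toIsSobolev.max hwh.toIsSobolev, fun x => le_max_of_le_left (hug.nonneg x),
    fun x => max_le (hug.le_one x) (hwh.le_one x), V ∪ W, hV.union hW,
    union_subset_union hA hB, ?_⟩
  rintro x (hx | hx)
  · rw [hu x hx, max_eq_left (hwh.le_one x)]
  · rw [hw x hx, max_eq_right (hug.le_one x)]

protected theorem min (hug : IsCapTest A u g) (hwh : IsCapTest B w h) :
    IsCapTest (A ∩ B) (fun x => min (u x) (w x))
      fun x => (1 - heaviside (u x - w x)) • g x + heaviside (u x - w x) • h x := by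
  obtain ⟨V, hV, hA, hu⟩ := hug.eq_one
  obtain ⟨W, hW, hB, hw⟩ := hwh.eq_one
  refine ⟨hug.toIsSobolev.min hwh.toIsSobolev, fun x => le_min (hug.nonneg x) (hwh.nonneg x),
    fun x => min_le_of_left_le (hug.le_one x), V ∩ W, hV.inter hW,
    inter_subset_inter hA hB, fun x hx => ?_⟩
  rw [hu x hx.1, hw x hx.2, min_self]

end IsCapTest

theorem cap1_mono (hAB : A ⊆ B) : cap1 A ≤ cap1 B := by
  refine sInf_le_sInf ?_
  rintro c ⟨u, g, hu, hg, hug, ⟨V, hV, hB, h1⟩, rfl⟩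
  exact ⟨u, g, hu, hg, hug, ⟨V, hV, hAB.trans hB, h1⟩, rfl⟩

theorem cap1_empty : cap1 (∅ : Set (En n)) = 0 := by
  have h := (IsSobolev.zero (n := n)).cap1_le isOpen_empty subset_rfl
    (ae_of_all _ fun x hx => hx.elim)
  simpa [sobolevNorm] using h

theorem cap1_iUnion_le_ofReal_tsum {A : ℕ → Set (En n)} {u : ℕ → En n → ℝ}
    {g : ℕ → En n → (En n →L[ℝ] ℝ)} (hug : ∀ i, IsCapTest (A i) (u i) (g i))
    (hs : Summable fun i => sobolevNorm (u i) (g i)) :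
    cap1 (⋃ i, A i) ≤ ENNReal.ofReal (∑' i, sobolevNorm (u i) (g i)) := by
  have hui := fun i => (hug i).integrable
  have hgi := fun i => (hug i).integrable_grad
  have hsu : Summable fun i => ∫ x, ‖u i x‖ :=
    .of_nonneg_of_le (fun i => integral_nonneg fun x => norm_nonneg _)
      (fun i => le_add_of_nonneg_right (integral_nonneg fun x => norm_nonneg _)) hs
  have hsg : Summable fun i => ∫ x, ‖g i x‖ :=
    .of_nonneg_of_le (fun i => integral_nonneg fun x => norm_nonneg _)
      (fun i => le_add_of_nonneg_left (integral_nonneg fun x => abs_nonneg _)) hs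
  choose V hV hAV hV1 using fun i => (hug i).eq_one
  refine ((IsSobolev.tsum (fun i => (hug i).toIsSobolev) hsu hsg).cap1_le
    (isOpen_iUnion hV) (iUnion_mono hAV) ?_).trans (ENNReal.ofReal_le_ofReal ?_)
  · filter_upwards [ae_summable_norm_of_summable_integral_norm hui hsu] with x hx hxV
    obtain ⟨i, hi⟩ := mem_iUnion.1 hxV
    rw [← hV1 i x hi]
    exact hx.of_norm.le_tsum i fun j _ => (hug j).nonneg x
  · exact (add_le_add (integral_norm_tsum_le hui hsu) (integral_norm_tsum_le hgi hsg)).trans_eq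
      (hsu.tsum_add hsg).symm

theorem cap1_iUnion_le (A : ℕ → Set (En n)) : cap1 (⋃ i, A i) ≤ ∑' i, cap1 (A i) := by
  rcases eq_or_ne (∑' i, cap1 (A i)) ∞ with htop | htop
  · exact htop.symm ▸ le_top
  have hA : ∀ i, cap1 (A i) ≠ ∞ := ENNReal.ne_top_of_tsum_ne_top htop
  refine ENNReal.le_of_forall_pos_le_add fun ε hε _ => ?_
  choose u g hug hn using fun i : ℕ =>
    exists_isCapTest (hA i) (show (0 : ℝ) < ε / 2 / 2 ^ i by positivity)
  have hsum := (ENNReal.summable_toReal htop).add (summable_geometric_two' (ε : ℝ))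
  have hs := hsum.of_nonneg_of_le (fun i => sobolevNorm_nonneg (u i) (g i)) hn
  calc cap1 (⋃ i, A i) ≤ ENNReal.ofReal (∑' i, sobolevNorm (u i) (g i)) :=
        cap1_iUnion_le_ofReal_tsum hug hs
    _ ≤ ENNReal.ofReal (∑' i, ((cap1 (A i)).toReal + ε / 2 / 2 ^ i)) :=
        ENNReal.ofReal_le_ofReal (hs.tsum_le_tsum hn hsum)
    _ = ENNReal.ofReal ((∑' i, cap1 (A i)).toReal + ε) := by
        rw [(ENNReal.summable_toReal htop).tsum_add (summable_geometric_two' _),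
          tsum_geometric_two', ENNReal.tsum_toReal_eq hA]
    _ = ∑' i, cap1 (A i) + ε := by
        rw [ENNReal.ofReal_add ENNReal.toReal_nonneg ε.coe_nonneg, ENNReal.ofReal_toReal htop,
          ENNReal.ofReal_coe_nnreal]

/-- `cap1` as an outer measure, which makes the general theory of outer measures available. -/
def cap1OuterMeasure (n : ℕ) : OuterMeasure (En n) where
  measureOf := cap1
  empty := cap1_empty
  mono := cap1_mono
  iUnion_nat A _ := cap1_iUnion_le A

theorem cap1_union_le (A B : Set (En n)) : cap1 (A ∪ B) ≤ cap1 A + cap1 B :=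
  measure_union_le (μ := cap1OuterMeasure n) A B

theorem cap1_iUnion_eq_zero {A : ℕ → Set (En n)} (hA : ∀ i, cap1 (A i) = 0) :
    cap1 (⋃ i, A i) = 0 :=
  measure_iUnion_null (μ := cap1OuterMeasure n) hA

end Capacity

section MonotoneTests

theorem exists_seq_of_forall_exists_succ {α : Type*} {P : ℕ → α → Prop} {r : ℕ → α → α → Prop}
    {a : α} (ha : P 0 a) (hsucc : ∀ k a, P k a → ∃ b, P (k + 1) b ∧ r k a b) :
    ∃ f : ℕ → α, f 0 = a ∧ (∀ k, P k (f k)) ∧ ∀ k, r k (f k) (f (k + 1)) := by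
  choose next hnext hr using hsucc
  let f : ∀ k, { b // P k b } :=
    fun k => Nat.rec ⟨a, ha⟩ (fun k b => ⟨next k b.1 b.2, hnext k b.1 b.2⟩) k
  exact ⟨fun k => (f k).1, rfl, fun k => (f k).2, fun k => hr k (f k).1 (f k).2⟩

theorem exists_monotone_isCapTest {A : ℕ → Set (En n)} (hA : Monotone A)
    (hfin : ∀ k, cap1 (A k) ≠ ∞) {η : ℝ} (hη : 0 < η) :
    ∃ (v : ℕ → En n → ℝ) (g : ℕ → En n → (En n →L[ℝ] ℝ)), Monotone v ∧
      (∀ j, IsCapTest (A j) (v j) (g j)) ∧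
      ∀ j, sobolevNorm (v j) (g j) ≤ (cap1 (A j)).toReal + η := by
  choose u h hu hnorm using fun k : ℕ => exists_isCapTest (hfin k)
    (show 0 < η * (1 / 2) ^ (k + 1) by positivity)
  obtain ⟨f, -, hf, hmono⟩ := exists_seq_of_forall_exists_succ
    (P := fun k (p : (En n → ℝ) × (En n → (En n →L[ℝ] ℝ))) => IsCapTest (A k) p.1 p.2 ∧
      sobolevNorm p.1 p.2 ≤ (cap1 (A k)).toReal + η * (1 - (1 / 2) ^ (k + 1)))
    (r := fun _ p q => p.1 ≤ q.1)
    (a := (u 0, h 0)) ⟨hu 0, (hnorm 0).trans_eq (by norm_num)⟩ (by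
      rintro k ⟨w, g⟩ ⟨hwg, hle⟩
      refine ⟨(_, _), ⟨(hwg.max (hu (k + 1))).mono subset_union_right, ?_⟩,
        fun x => le_max_left _ _⟩
      have hmin := (hwg.min (hu (k + 1))).toReal_cap1_le
      rw [inter_eq_self_of_subset_left (hA k.le_succ)] at hmin
      have hsub := hwg.toIsSobolev.sobolevNorm_max_add_min_le (hu (k + 1)).toIsSobolev
      have hpow : (1 / 2 : ℝ) ^ (k + 1) = 2 * (1 / 2) ^ (k + 1 + 1) := by ring
      rw [hpow] at hle
      linarith [hnorm (k + 1)])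
  refine ⟨fun k => (f k).1, fun k => (f k).2, monotone_nat_of_le_succ hmono, fun k => (hf k).1,
    fun k => (hf k).2.trans ?_⟩
  gcongr
  exact mul_le_of_le_one_right hη.le (sub_le_self 1 (by positivity))

end MonotoneTests

section Poincare

section Smooth

variable {E : Type*} [NormedAddCommGroup E] [NormedSpace ℝ E] {u : E → ℝ}

theorem enorm_sub_le_lintegral_fderiv (hu : ContDiff ℝ 1 u) (x y : E) :
    ‖u x - u (x - y)‖ₑ ≤ ∫⁻ s in Ioc (0 : ℝ) 1, ‖fderiv ℝ u (x - s • y)‖ₑ * ‖y‖ₑ := by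
  have hline : ∀ s : ℝ, HasDerivAt (fun s : ℝ => -u (x - s • y)) (fderiv ℝ u (x - s • y) y) s := by
    intro s
    have hseg : HasDerivAt (fun s : ℝ => x - s • y) (-y) s := by
      simpa using ((hasDerivAt_id s).smul_const y).const_sub x
    simpa using!
      ((hu.differentiable one_ne_zero (x - s • y)).hasFDerivAt.comp_hasDerivAt s hseg).neg
  have hcont : Continuous fun s : ℝ => fderiv ℝ u (x - s • y) y :=
    (hu.continuous_fderiv one_ne_zero).clm_apply continuous_const |>.comp (by fun_prop)
  have hftc : u x - u (x - y) = ∫ s in Ioc (0 : ℝ) 1, fderiv ℝ u (x - s • y) y := by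
    rw [← intervalIntegral.integral_of_le zero_le_one,
      intervalIntegral.integral_eq_sub_of_hasDerivAt (fun s _ => hline s)
        (hcont.intervalIntegrable _ _), one_smul, zero_smul, sub_zero]
    ring
  rw [hftc]
  exact (enorm_integral_le_lintegral_enorm _).trans
    (lintegral_mono fun s => ContinuousLinearMap.le_opENorm _ _)

variable [MeasureSpace E] [BorelSpace E] [FiniteDimensional ℝ E]
  [(volume : Measure E).IsAddHaarMeasure] {T T' : Set E}

theorem lintegral_enorm_sub_translate_le (hu : ContDiff ℝ 1 u) (y : E)
    (h : ∀ x ∈ T, ∀ s ∈ Icc (0 : ℝ) 1, x - s • y ∈ T') :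
    ∫⁻ x in T, ‖u x - u (x - y)‖ₑ ≤ ‖y‖ₑ * ∫⁻ x in T', ‖fderiv ℝ u x‖ₑ := by
  have hc : Continuous (fderiv ℝ u) := hu.continuous_fderiv one_ne_zero
  have htranslate : ∀ z, (∀ x ∈ T, x - z ∈ T') →
      ∫⁻ x in T, ‖fderiv ℝ u (x - z)‖ₑ ≤ ∫⁻ x in T', ‖fderiv ℝ u x‖ₑ := fun z hz =>
    (lintegral_mono_set hz).trans_eq
      ((measurePreserving_sub_right volume z).setLIntegral_comp_preimage_emb
        (measurableEmbedding_subRight z) (fun x => ‖fderiv ℝ u x‖ₑ) T')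
  calc ∫⁻ x in T, ‖u x - u (x - y)‖ₑ
      ≤ ∫⁻ x in T, ∫⁻ s in Ioc (0 : ℝ) 1, ‖fderiv ℝ u (x - s • y)‖ₑ * ‖y‖ₑ :=
        lintegral_mono fun x => enorm_sub_le_lintegral_fderiv hu x y
    _ = ∫⁻ s in Ioc (0 : ℝ) 1, ∫⁻ x in T, ‖fderiv ℝ u (x - s • y)‖ₑ * ‖y‖ₑ := by
        refine lintegral_lintegral_swap (Measurable.aemeasurable ?_)
        have : Continuous fun p : E × ℝ => ‖fderiv ℝ u (p.1 - p.2 • y)‖ₑ :=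
          (hc.comp (by fun_prop)).enorm
        exact this.measurable.mul_const _
    _ ≤ ∫⁻ _ in Ioc (0 : ℝ) 1, ‖y‖ₑ * ∫⁻ x in T', ‖fderiv ℝ u x‖ₑ := by
        refine setLIntegral_mono measurable_const fun s hs => ?_
        rw [lintegral_mul_const' _ _ enorm_ne_top, mul_comm]
        exact mul_le_mul_right (htranslate (s • y) fun x hx => h x hx s ⟨hs.1.le, hs.2⟩) _
    _ = ‖y‖ₑ * ∫⁻ x in T', ‖fderiv ℝ u x‖ₑ := by
        rw [setLIntegral_const, Real.volume_Ioc, sub_zero, ENNReal.ofReal_one, mul_one]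

variable (b : ContDiffBump (0 : E))

theorem enorm_sub_mollify_le (hu : LocallyIntegrable u) (x : E) :
    ‖u x - mollify b u x‖ₑ ≤ ∫⁻ y, ‖b.normed volume y‖ₑ * ‖u x - u (x - y)‖ₑ := by
  have hconv : u x - mollify b u x = ∫ y, b.normed volume y * (u x - u (x - y)) := by
    have hi : Integrable fun y => b.normed volume y * u (x - y) :=
      convolutionExistsAt_mollify b hu x
    simp only [mul_sub]
    rw [integral_sub (b.integrable_normed.mul_const _) hi, integral_mul_const, b.integral_normed,
      one_mul, mollify_apply]
    simp only [smul_eq_mul]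
  rw [hconv]
  refine (enorm_integral_le_lintegral_enorm _).trans_eq (lintegral_congr fun y => ?_)
  rw [enorm_mul]

theorem lintegral_enorm_sub_mollify_le (hu : ContDiff ℝ 1 u)
    (h : ∀ x ∈ T, ball x b.rOut ⊆ T') :
    ∫⁻ x in T, ‖u x - mollify b u x‖ₑ ≤ ‖b.rOut‖ₑ * ∫⁻ x in T', ‖fderiv ℝ u x‖ₑ := by
  have hmeas : Measurable fun p : E × E => ‖b.normed volume p.2‖ₑ * ‖u p.1 - u (p.1 - p.2)‖ₑ := by
    refine Measurable.mul (f := fun p : E × E => ‖b.normed volume p.2‖ₑ)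
      (g := fun p : E × E => ‖u p.1 - u (p.1 - p.2)‖ₑ) ?_ ?_
    · exact (b.continuous_normed.comp continuous_snd).enorm.measurable
    · have := hu.continuous
      exact (by fun_prop : Continuous fun p : E × E => u p.1 - u (p.1 - p.2)).enorm.measurable
  have hmass : ∫⁻ y, ‖b.normed volume y‖ₑ = 1 := by
    rw [← ofReal_integral_norm_eq_lintegral_enorm b.integrable_normed]
    simp only [Real.norm_of_nonneg (b.nonneg_normed _), b.integral_normed, ENNReal.ofReal_one]
  calc ∫⁻ x in T, ‖u x - mollify b u x‖ₑ
      ≤ ∫⁻ x in T, ∫⁻ y, ‖b.normed volume y‖ₑ * ‖u x - u (x - y)‖ₑ :=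
        lintegral_mono fun x => enorm_sub_mollify_le b hu.continuous.locallyIntegrable x
    _ = ∫⁻ y, ‖b.normed volume y‖ₑ * ∫⁻ x in T, ‖u x - u (x - y)‖ₑ := by
        rw [lintegral_lintegral_swap hmeas.aemeasurable]
        simp only [lintegral_const_mul' _ _ enorm_ne_top]
    _ ≤ ∫⁻ y, ‖b.normed volume y‖ₑ * (‖b.rOut‖ₑ * ∫⁻ x in T', ‖fderiv ℝ u x‖ₑ) := by
        refine lintegral_mono fun y => ?_
        by_cases hy : y ∈ ball (0 : E) b.rOut
        · have hy' : ‖y‖ < b.rOut := mem_ball_zero_iff.1 hy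
          gcongr
          refine (lintegral_enorm_sub_translate_le hu y fun x hx s hs => h x hx ?_).trans ?_
          · rw [mem_ball, dist_eq_norm, sub_sub_cancel_left, norm_neg, norm_smul,
              Real.norm_of_nonneg hs.1]
            exact (mul_le_of_le_one_left (norm_nonneg _) hs.2).trans_lt hy'
          · gcongr
            exact enorm_le_iff_norm_le.2 (hy'.le.trans (le_abs_self _))
        · rw [← b.support_normed_eq (μ := volume), Function.notMem_support] at hy
          simp only [hy, enorm_zero, zero_mul, le_refl]
    _ = ‖b.rOut‖ₑ * ∫⁻ x in T', ‖fderiv ℝ u x‖ₑ := by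
        rw [lintegral_mul_const _ b.continuous_normed.enorm.measurable, hmass, one_mul]

theorem integral_abs_sub_mollify_le_of_contDiff (hu : ContDiff ℝ 1 u) (hi : Integrable u)
    (hi' : Integrable (fderiv ℝ u)) (h : ∀ x ∈ T, ball x b.rOut ⊆ T') :
    ∫ x in T, |u x - mollify b u x| ≤ b.rOut * ∫ x in T', ‖fderiv ℝ u x‖ := by
  have hsub : Integrable fun x => u x - mollify b u x := hi.sub (integrable_mollify b hi)
  have hl := lintegral_enorm_sub_mollify_le b hu h
  rw [← ofReal_integral_norm_eq_lintegral_enorm hsub.restrict,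
    ← ofReal_integral_norm_eq_lintegral_enorm hi'.restrict,
    Real.enorm_of_nonneg b.rOut_pos.le, ← ENNReal.ofReal_mul b.rOut_pos.le] at hl
  exact (ENNReal.ofReal_le_ofReal_iff
    (mul_nonneg b.rOut_pos.le (integral_nonneg fun _ => norm_nonneg _))).1 hl

theorem tendsto_integral_norm_sub_mollify_sub {ι : Type*} {l : Filter ι} {U : ι → E → ℝ}
    (hU : ∀ i, Integrable (U i)) (hu : Integrable u)
    (hlim : Tendsto (fun i => ∫ x, ‖U i x - u x‖) l (𝓝 0)) :
    Tendsto (fun i => ∫ x, ‖(U i x - mollify b (U i) x) - (u x - mollify b u x)‖) l (𝓝 0) := by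
  have htwice := hlim.add hlim
  rw [add_zero] at htwice
  refine squeeze_zero (fun i => integral_nonneg fun _ => norm_nonneg _) (fun i => ?_) htwice
  have hsub : Integrable (U i - u) := (hU i).sub hu
  calc ∫ x, ‖(U i x - mollify b (U i) x) - (u x - mollify b u x)‖
      = ∫ x, ‖(U i - u) x - mollify b (U i - u) x‖ := by
        simp only [mollify_sub b (hU i).locallyIntegrable hu.locallyIntegrable, Pi.sub_apply,
          sub_sub_sub_comm]
    _ ≤ ∫ x, (‖(U i - u) x‖ + ‖mollify b (U i - u) x‖) :=
        integral_mono (hsub.sub (integrable_mollify b hsub)).norm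
          (hsub.norm.add (integrable_mollify b hsub).norm) fun x => norm_sub_le _ _
    _ ≤ (∫ x, ‖(U i - u) x‖) + ∫ x, ‖(U i - u) x‖ := by
        rw [integral_add hsub.norm (integrable_mollify b hsub).norm]
        exact add_le_add_right (integral_norm_mollify_le b hsub) _

end Smooth

variable {u : En n → ℝ} {g : En n → (En n →L[ℝ] ℝ)} {T T' : Set (En n)}

theorem IsSobolev.integral_abs_sub_mollify_le (hug : IsSobolev u g)
    (b : ContDiffBump (0 : En n)) (h : ∀ x ∈ T, ball x b.rOut ⊆ T') :
    ∫ x in T, |u x - mollify b u x| ≤ b.rOut * ∫ x in T', ‖g x‖ := by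
  set U : ℕ → En n → ℝ := fun i => mollify (bumpSeq (En n) i) u
  have hUs : ∀ i, IsSobolev (U i) (mollify (bumpSeq (En n) i) g) := fun i => hug.mollify _
  have hgrad : ∀ i, fderiv ℝ (U i) = mollify (bumpSeq (En n) i) g := fun i =>
    funext (hug.fderiv_mollify _)
  have hleft : Tendsto (fun i => ∫ x in T, |U i x - mollify b (U i) x|) atTop
      (𝓝 (∫ x in T, |u x - mollify b u x|)) :=
    tendsto_setIntegral_norm
      (fun i => (hUs i).integrable.sub (integrable_mollify b (hUs i).integrable))
      (hug.integrable.sub (integrable_mollify b hug.integrable))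
      (tendsto_integral_norm_sub_mollify_sub b (fun i => (hUs i).integrable) hug.integrable
        (tendsto_integral_norm_mollify_bumpSeq_sub hug.integrable)) T
  have hright : Tendsto (fun i => ∫ x in T', ‖mollify (bumpSeq (En n) i) g x‖) atTop
      (𝓝 (∫ x in T', ‖g x‖)) :=
    tendsto_setIntegral_norm (fun i => (hUs i).integrable_grad) hug.integrable_grad
      (tendsto_integral_norm_mollify_bumpSeq_sub hug.integrable_grad) T'
  refine le_of_tendsto_of_tendsto' hleft (hright.const_mul b.rOut) fun i => ?_
  rw [← hgrad i]
  exact integral_abs_sub_mollify_le_of_contDiff b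
    (contDiff_mollify _ hug.integrable.locallyIntegrable) (hUs i).integrable
    (hgrad i ▸ (hUs i).integrable_grad) h

end Poincare

section Cutoff

variable {E : Type*} [NormedAddCommGroup E] [NormedSpace ℝ E] {S : Set E} {τ : ℝ} {ζ : E → ℝ}

/-- A `C¹` cutoff function for `S` at scale `τ`: it is one on `S`, vanishes at distance at least
`5 * τ` from `S` and has gradient at most `τ⁻¹`. The factor `5` leaves room for obtaining the
function by mollification. -/
structure IsCutoff (S : Set E) (τ : ℝ) (ζ : E → ℝ) : Prop where
  contDiff : ContDiff ℝ 1 ζ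
  nonneg : ∀ x, 0 ≤ ζ x
  le_one : ∀ x, ζ x ≤ 1
  eq_one : ∀ x ∈ S, ζ x = 1
  eq_zero : ∀ x ∉ thickening (5 * τ) S, ζ x = 0
  norm_fderiv_le : ∀ x, ‖fderiv ℝ ζ x‖ ≤ τ⁻¹

namespace IsCutoff

theorem abs_le_one (hζ : IsCutoff S τ ζ) (x : E) : |ζ x| ≤ 1 :=
  (abs_of_nonneg (hζ.nonneg x)).trans_le (hζ.le_one x)

theorem fderiv_eq_zero (hζ : IsCutoff S τ ζ) {x : E} (hx : x ∉ thickening (5 * τ) S) :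
    fderiv ℝ ζ x = 0 :=
  IsLocalMin.fderiv_eq_zero <| Eventually.of_forall fun y =>
    (hζ.eq_zero x hx).trans_le (hζ.nonneg y)

end IsCutoff

theorem ball_subset_thickening_add {X : Type*} [PseudoMetricSpace X] {S : Set X} {x : X} {δ : ℝ}
    (hx : x ∈ thickening δ S) (r : ℝ) : ball x r ⊆ thickening (r + δ) S := fun _ hy =>
  thickening_thickening_subset r δ S (mem_thickening_iff.2 ⟨x, hx, hy⟩)

theorem exists_isCutoff [FiniteDimensional ℝ E] (S : Set E) (hτ : 0 < τ) :
    ∃ ζ, IsCutoff S τ ζ := by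
  borelize E
  let : MeasureSpace E := ⟨Measure.addHaar⟩
  have : (volume : Measure E).IsAddHaarMeasure := inferInstanceAs Measure.addHaar.IsAddHaarMeasure
  let b : ContDiffBump (0 : E) := ⟨τ, 2 * τ, hτ, by linarith⟩
  set χ := thickenedIndicator hτ (thickening (2 * τ) S)
  set u : E → ℝ := fun x => χ x
  have hlip : LipschitzWith τ.toNNReal⁻¹ u := lipschitzWith_thickenedIndicator hτ _
  have hone : ∀ x ∈ S, ∀ y ∈ ball x (2 * τ), u y = 1 := fun x hx y hy =>
    congrArg NNReal.toReal (thickenedIndicator_one hτ _ (mem_thickening_iff.2 ⟨x, hx, hy⟩))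
  have hzero : ∀ x ∉ thickening (5 * τ) S, ∀ y ∈ ball x (2 * τ), u y = 0 := fun x hx y hy => by
    have hy' : y ∉ thickening τ (thickening (2 * τ) S) := fun h => hx <| by
      rw [show 5 * τ = 2 * τ + (τ + 2 * τ) by ring]
      exact ball_subset_thickening_add (thickening_thickening_subset _ _ _ h) _ (mem_ball_comm.1 hy)
    exact congrArg NNReal.toReal (thickenedIndicator_zero hτ _ hy')
  have hconst : ∀ {x : E} {c : ℝ}, (∀ y ∈ ball x (2 * τ), u y = c) → mollify b u x = c :=
    fun {x c} h => (mollify_congr b h).trans (mollify_eq_of_forall_mem_ball b fun _ _ => rfl)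
  refine ⟨mollify b u, contDiff_mollify b hlip.continuous.locallyIntegrable,
    mollify_nonneg b fun _ => NNReal.coe_nonneg _, fun x => ?_, fun x hx => hconst (hone x hx),
    fun x hx => hconst (hzero x hx), fun x => ?_⟩
  · exact (mollify_mono b hlip.continuous.locallyIntegrable
      (continuous_const (y := (1 : ℝ))).locallyIntegrable
      (fun y => thickenedIndicator_le_one hτ _ y) x).trans_eq
        (mollify_eq_of_forall_mem_ball b fun _ _ => rfl)
  · simpa only [NNReal.coe_inv, Real.coe_toNNReal _ hτ.le] using
      norm_fderiv_le_of_lipschitz ℝ (lipschitzWith_mollify b hlip) (x₀ := x)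

end Cutoff

section Superlevel

variable {A V : Set (En n)} {u : En n → ℝ} {g : En n → (En n →L[ℝ] ℝ)} {s : ℝ}

theorem IsSobolev.one_sub_mul_toReal_cap1_le (hug : IsSobolev u g) (hV : IsOpen V) (hA : A ⊆ V)
    (hu : ∀ x ∈ V, u x = 1) (hs₀ : 0 ≤ s) (hs₁ : s < 1) :
    (1 - s) * (cap1 A).toReal ≤
      sobolevNorm (fun x => max (u x - s) 0) fun x => heaviside (u x - s) • g x :=
  (hug.above hs₀).mul_toReal_cap1_le hV hA (sub_pos.2 hs₁) fun x hx =>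
    le_max_of_le_left (by rw [hu x hx])

theorem IsSobolev.sobolevNorm_above_le (hug : IsSobolev u g) (hs : 0 ≤ s)
    (hm : MeasurableSet {x | s ≤ u x}) :
    sobolevNorm (fun x => max (u x - s) 0) (fun x => heaviside (u x - s) • g x) ≤
      (∫ x, |u x|) + ∫ x in {x | s ≤ u x}, ‖g x‖ := by
  have habove := hug.above hs
  refine add_le_add (integral_mono habove.integrable.abs hug.integrable.abs fun x => ?_) ?_
  · rw [abs_of_nonneg (le_max_right (u x - s) 0)]
    exact max_le ((sub_le_self _ hs).trans (le_abs_self _)) (abs_nonneg _)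
  · rw [← integral_indicator hm]
    refine integral_mono habove.integrable_grad.norm (hug.integrable_grad.norm.indicator hm)
      fun x => ?_
    by_cases hx : s ≤ u x
    · rw [indicator_of_mem (by exact hx)]
      exact norm_heaviside_smul_le (u x - s) (g x)
    · rw [indicator_of_notMem (by exact hx)]
      simp only [heaviside_of_neg (sub_neg.2 (not_le.1 hx)), zero_smul, norm_zero, le_refl]

-- The part of `u` above level `s` competes for `A`, the part below for the superlevel set.
theorem IsSobolev.cap1_superlevel_le (hug : IsSobolev u g) (hV : IsOpen V) (hA : A ⊆ V)
    (hu : ∀ x ∈ V, u x = 1) (hu₀ : ∀ x, 0 ≤ u x) (huc : Continuous u) (hs₀ : 0 < s)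
    (hs₁ : s < 1) :
    cap1 {x | s < u x} ≤
      ENNReal.ofReal ((sobolevNorm u g - (1 - s) * (cap1 A).toReal) / s) := by
  refine ((hug.below hs₀.le).cap1_le_div (isOpen_lt continuous_const huc) subset_rfl hs₀
    fun x hx => le_min (le_of_lt hx) le_rfl).trans (ENNReal.ofReal_le_ofReal ?_)
  gcongr
  linarith [hug.sobolevNorm_above_add_below hs₀.le hu₀,
    hug.one_sub_mul_toReal_cap1_le hV hA hu hs₀.le hs₁]

end Superlevel

section TestSequences

variable {A : ℕ → Set (En n)} {N : ℝ} {v : ℕ → En n → ℝ} {g : ℕ → En n → (En n →L[ℝ] ℝ)}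
  {w : En n → ℝ} (b : ContDiffBump (0 : En n))

/-- An increasing sequence of test functions for the sets `A j` with Sobolev norms at most `N`,
together with its pointwise limit `w`. The limit need not be a Sobolev function. -/
structure IsTestSeq (A : ℕ → Set (En n)) (N : ℝ) (v : ℕ → En n → ℝ)
    (g : ℕ → En n → (En n →L[ℝ] ℝ)) (w : En n → ℝ) : Prop where
  isCapTest : ∀ j, IsCapTest (A j) (v j) (g j)
  monotone : Monotone v
  sobolevNorm_le : ∀ j, sobolevNorm (v j) (g j) ≤ N
  tendsto : ∀ x, Tendsto (fun j => v j x) atTop (𝓝 (w x))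

theorem exists_isTestSeq (hA : Monotone A) (hfin : ⨆ k, cap1 (A k) ≠ ∞) {η : ℝ} (hη : 0 < η) :
    ∃ v g w, IsTestSeq A ((⨆ k, cap1 (A k)).toReal + η) v g w := by
  obtain ⟨v, g, hv, hvg, hN⟩ :=
    exists_monotone_isCapTest hA (fun k => ne_top_of_le_ne_top hfin (le_iSup (cap1 ∘ A) k)) hη
  refine ⟨v, g, fun x => ⨆ j, v j x, hvg, hv, fun j => (hN j).trans ?_, fun x => ?_⟩
  · gcongr
    exact le_iSup (fun k => cap1 (A k)) j
  · exact tendsto_atTop_ciSup (fun _ _ hij => hv hij x)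
      ⟨1, forall_mem_range.2 fun j => (hvg j).le_one x⟩

namespace IsTestSeq

theorem le (hv : IsTestSeq A N v g w) (j : ℕ) (x : En n) : v j x ≤ w x :=
  (show Monotone fun j => v j x from fun _ _ hij => hv.monotone hij x).ge_of_tendsto
    (hv.tendsto x) j

theorem nonneg (hv : IsTestSeq A N v g w) (x : En n) : 0 ≤ w x :=
  ((hv.isCapTest 0).nonneg x).trans (hv.le 0 x)

theorem eq_one (hv : IsTestSeq A N v g w) {x : En n} (hx : x ∈ ⋃ j, A j) : w x = 1 := by
  obtain ⟨j, hj⟩ := mem_iUnion.1 hx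
  obtain ⟨V, -, hAV, hV⟩ := (hv.isCapTest j).eq_one
  refine le_antisymm (le_of_tendsto' (hv.tendsto x) fun i => (hv.isCapTest i).le_one x) ?_
  exact (hV x (hAV hj)).symm.trans_le (hv.le j x)

theorem integrable (hv : IsTestSeq A N v g w) : Integrable w :=
  integrable_of_tendsto_of_integral_norm_le (fun j => (hv.isCapTest j).integrable)
    (fun j => (le_add_of_nonneg_right (integral_nonneg fun _ => norm_nonneg _)).trans
      (hv.sobolevNorm_le j)) (ae_of_all _ hv.tendsto)

theorem tendsto_integral_norm_sub (hv : IsTestSeq A N v g w) :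
    Tendsto (fun j => ∫ x, ‖v j x - w x‖) atTop (𝓝 0) :=
  tendsto_integral_norm_sub_of_norm_le
    (fun j => (hv.isCapTest j).integrable.aestronglyMeasurable) hv.integrable
    (fun j x => (abs_of_nonneg ((hv.isCapTest j).nonneg x)).trans_le (hv.le j x))
    (ae_of_all _ hv.tendsto)

theorem tendsto_integral_abs (hv : IsTestSeq A N v g w) :
    Tendsto (fun j => ∫ x, |v j x|) atTop (𝓝 (∫ x, |w x|)) := by
  simpa only [Measure.restrict_univ] using! tendsto_setIntegral_norm
    (fun j => (hv.isCapTest j).integrable) hv.integrable hv.tendsto_integral_norm_sub univ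

theorem tendsto_setIntegral_norm_fderiv_mollify (hv : IsTestSeq A N v g w) (P : Set (En n)) :
    Tendsto (fun j => ∫ x in P, ‖mollify b (g j) x‖) atTop
      (𝓝 (∫ x in P, ‖fderiv ℝ (mollify b w) x‖)) := by
  have hv' := fun j => (hv.isCapTest j).integrable
  simp only [← (hv.isCapTest _).fderiv_mollify b]
  refine tendsto_setIntegral_norm (fun j => integrable_fderiv_mollify b (hv' j))
    (integrable_fderiv_mollify b hv.integrable) ?_ P
  refine squeeze_zero (fun j => integral_nonneg fun x => norm_nonneg _)
    (fun j => integral_norm_fderiv_mollify_sub_le b (hv' j) hv.integrable) ?_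
  simpa only [zero_mul] using! hv.tendsto_integral_norm_sub.mul_const _

theorem isSobolev_mollify (hv : IsTestSeq A N v g w) :
    IsSobolev (mollify b w) (fderiv ℝ (mollify b w)) :=
  .of_contDiff (contDiff_mollify b hv.integrable.locallyIntegrable)
    (integrable_mollify b hv.integrable) (integrable_fderiv_mollify b hv.integrable)

theorem sobolevNorm_mollify_le (hv : IsTestSeq A N v g w) :
    sobolevNorm (mollify b w) (fderiv ℝ (mollify b w)) ≤ N := by
  have hgrad := hv.tendsto_setIntegral_norm_fderiv_mollify b univ
  simp only [Measure.restrict_univ] at hgrad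
  calc sobolevNorm (mollify b w) (fderiv ℝ (mollify b w))
      ≤ (∫ x, |w x|) + ∫ x, ‖fderiv ℝ (mollify b w) x‖ :=
        add_le_add_left (integral_norm_mollify_le b hv.integrable) _
    _ ≤ N := le_of_tendsto' (hv.tendsto_integral_abs.add hgrad) fun j =>
        (add_le_add_right (integral_norm_mollify_le b (hv.isCapTest j).integrable_grad) _).trans
          (hv.sobolevNorm_le j)

theorem mollify_eq_one (hv : IsTestSeq A N v g w) {x : En n} (hx : ball x b.rOut ⊆ ⋃ j, A j) :
    mollify b w x = 1 := by
  have hx₁ := hv.eq_one (hx (mem_ball_self b.rOut_pos))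
  rw [← hx₁]
  exact mollify_eq_of_forall_mem_ball b fun y hy => (hv.eq_one (hx hy)).trans hx₁.symm

end IsTestSeq

end TestSequences

section Localization

variable {A S : Set (En n)} {u ζ : En n → ℝ} {g : En n → (En n →L[ℝ] ℝ)} {τ t : ℝ}

theorem IsCutoff.isSobolev_mul (hζ : IsCutoff S τ ζ) (hug : IsSobolev u g) :
    IsSobolev (fun x => ζ x * u x) fun x => ζ x • g x + u x • fderiv ℝ ζ x :=
  hug.mul_contDiff hζ.contDiff hζ.abs_le_one hζ.norm_fderiv_le

theorem IsCutoff.sobolevNorm_mul_le (hζ : IsCutoff S τ ζ) (hug : IsSobolev u g) :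
    sobolevNorm (fun x => ζ x * u x) (fun x => ζ x • g x + u x • fderiv ℝ ζ x) ≤
      (∫ x in thickening (5 * τ) S, ‖g x‖) + (1 + τ⁻¹) * ∫ x in thickening (5 * τ) S, |u x| := by
  have hT : MeasurableSet (thickening (5 * τ) S) := isOpen_thickening.measurableSet
  have hu := hug.integrable.abs
  have hg := hug.integrable_grad.norm
  have hmul := hζ.isSobolev_mul hug
  have hfun : ∫ x, |ζ x * u x| ≤ ∫ x in thickening (5 * τ) S, |u x| := by
    rw [← integral_indicator hT]
    refine integral_mono hmul.integrable.abs (hu.indicator hT) fun x => ?_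
    by_cases hx : x ∈ thickening (5 * τ) S
    · simp only [indicator_of_mem hx, abs_mul]
      exact mul_le_of_le_one_left (abs_nonneg _) (hζ.abs_le_one x)
    · simp only [indicator_of_notMem hx, hζ.eq_zero x hx, zero_mul, abs_zero, le_refl]
  have hgrad : ∫ x, ‖ζ x • g x + u x • fderiv ℝ ζ x‖ ≤
      ∫ x in thickening (5 * τ) S, (‖g x‖ + |u x| * τ⁻¹) := by
    rw [← integral_indicator hT]
    refine integral_mono hmul.integrable_grad.norm
      ((hg.add (hu.mul_const τ⁻¹)).indicator hT) fun x => ?_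
    by_cases hx : x ∈ thickening (5 * τ) S
    · simp only [indicator_of_mem hx]
      refine (norm_add_le _ _).trans (add_le_add ?_ ?_)
      · rw [norm_smul]
        exact mul_le_of_le_one_left (norm_nonneg _) (hζ.abs_le_one x)
      · rw [norm_smul]
        exact mul_le_mul_of_nonneg_left (hζ.norm_fderiv_le x) (norm_nonneg _)
    · simp only [indicator_of_notMem hx, hζ.eq_zero x hx, hζ.fderiv_eq_zero hx, zero_smul,
        smul_zero, add_zero, norm_zero, le_refl]
  rw [integral_add hg.restrict (hu.mul_const _).restrict, integral_mul_const] at hgrad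
  unfold sobolevNorm
  linarith

theorem IsCapTest.setIntegral_abs_above_le (hug : IsCapTest A u g) (b : ContDiffBump (0 : En n))
    (ht : 0 ≤ t) {δ : ℝ} (hsmall : ∀ x ∈ thickening δ S, mollify b u x ≤ t) :
    ∫ x in thickening δ S, |max (u x - t) 0| ≤
      b.rOut * ∫ x in thickening (b.rOut + δ) S, ‖g x‖ := by
  have hle : ∀ x ∈ thickening δ S, |max (u x - t) 0| ≤ |u x - mollify b u x| := fun x hx => by
    rw [abs_of_nonneg (le_max_right _ _)]
    exact max_le ((sub_le_sub_left (hsmall x hx) _).trans (le_abs_self _)) (abs_nonneg _)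
  have hdiff := (hug.integrable.sub (integrable_mollify b hug.integrable)).abs
  refine (setIntegral_mono_on (hug.above ht).integrable.abs.restrict hdiff.restrict
    isOpen_thickening.measurableSet hle).trans ?_
  exact hug.integral_abs_sub_mollify_le b fun x hx => ball_subset_thickening_add hx _

theorem IsCapTest.cap1_inter_le (hug : IsCapTest A u g) (hS : IsOpen S) (hτ₀ : 0 < τ)
    (hτ₁ : τ ≤ 1) {b : ContDiffBump (0 : En n)} (hb : b.rOut = 2 * τ) (ht₀ : 0 ≤ t)
    (ht₁ : t ≤ 1 / 2) (hsmall : ∀ x ∈ thickening (5 * τ) S, mollify b u x ≤ t) :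
    cap1 (A ∩ S) ≤ ENNReal.ofReal (10 * ∫ x in thickening (7 * τ) S, ‖g x‖) := by
  obtain ⟨ζ, hζ⟩ := exists_isCutoff S hτ₀
  obtain ⟨V, hV, hAV, hu⟩ := hug.eq_one
  have habove := hug.above ht₀
  refine ((hζ.isSobolev_mul habove).cap1_le_div (hV.inter hS) (inter_subset_inter_left S hAV)
    (sub_pos.2 (ht₁.trans_lt one_half_lt_one)) fun x hx => ?_).trans
      (ENNReal.ofReal_le_ofReal ?_)
  · rw [hζ.eq_one x hx.2, hu x hx.1, one_mul]
    exact le_max_left _ _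
  set G := ∫ x in thickening (7 * τ) S, ‖g x‖ with hG
  have hG₀ : 0 ≤ G := integral_nonneg fun x => norm_nonneg _
  have hgrad : ∫ x in thickening (5 * τ) S, ‖heaviside (u x - t) • g x‖ ≤ G :=
    (integral_mono habove.integrable_grad.norm.restrict hug.integrable_grad.norm.restrict
      fun x => norm_heaviside_smul_le (u x - t) (g x)).trans <|
    setIntegral_mono_set hug.integrable_grad.norm.integrableOn (ae_of_all _ fun x => norm_nonneg _)
      (thickening_mono (by linarith) S).eventuallyLE
  have hfun : ∫ x in thickening (5 * τ) S, |max (u x - t) 0| ≤ 2 * τ * G := by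
    rw [hG, ← hb, show 7 * τ = b.rOut + 5 * τ by rw [hb]; ring]
    exact hug.setIntegral_abs_above_le b ht₀ hsmall
  rw [div_le_iff₀' (by linarith)]
  calc _ ≤ _ + (1 + τ⁻¹) * _ := hζ.sobolevNorm_mul_le habove
    _ ≤ G + (1 + τ⁻¹) * (2 * τ * G) := by gcongr
    _ = (3 + 2 * τ) * G := by field_simp; ring
    _ ≤ (1 - t) * (10 * G) := by nlinarith

end Localization

section Improvement

variable {A : ℕ → Set (En n)} {B : Set (En n)} {N : ℝ} {v : ℕ → En n → ℝ}
  {g : ℕ → En n → (En n →L[ℝ] ℝ)} {w : En n → ℝ} {b : ContDiffBump (0 : En n)} {d t : ℝ}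

namespace IsTestSeq

theorem exists_isOpen_mollify_eq_one (hv : IsTestSeq A N v g w)
    (hd : thickening d B ⊆ ⋃ j, A j) (hb : b.rOut < d) :
    ∃ V, IsOpen V ∧ B ⊆ V ∧ ∀ x ∈ V, mollify b w x = 1 := by
  refine ⟨thickening (d - b.rOut) B, isOpen_thickening,
    self_subset_thickening (sub_pos.2 hb) B, fun x hx => hv.mollify_eq_one b ?_⟩
  have hball := ball_subset_thickening_add hx b.rOut
  rw [add_sub_cancel] at hball
  exact hball.trans hd

theorem cap1_superlevel_mollify_le (hv : IsTestSeq A N v g w)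
    (hd : thickening d B ⊆ ⋃ j, A j) (hb : b.rOut < d) {s : ℝ} (hs₀ : 0 < s) (hs₁ : s < 1) :
    cap1 {x | s < mollify b w x} ≤ ENNReal.ofReal ((N - (1 - s) * (cap1 B).toReal) / s) := by
  obtain ⟨V, hV, hBV, hw⟩ := hv.exists_isOpen_mollify_eq_one hd hb
  refine ((hv.isSobolev_mollify b).cap1_superlevel_le hV hBV hw (mollify_nonneg b hv.nonneg)
    (contDiff_mollify b hv.integrable.locallyIntegrable).continuous hs₀ hs₁).trans
    (ENNReal.ofReal_le_ofReal ?_)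
  gcongr
  exact hv.sobolevNorm_mollify_le b

theorem measurableSet_superlevel_mollify (hv : IsTestSeq A N v g w) (t : ℝ) :
    MeasurableSet {x | t ≤ mollify b w x} :=
  (isClosed_le continuous_const
    (contDiff_mollify b hv.integrable.locallyIntegrable).continuous).measurableSet

theorem one_sub_mul_toReal_cap1_le (hv : IsTestSeq A N v g w)
    (hd : thickening d B ⊆ ⋃ j, A j) (hb : b.rOut < d) (ht₀ : 0 ≤ t) (ht₁ : t < 1) :
    (1 - t) * (cap1 B).toReal ≤
      (∫ x, |w x|) + ∫ x in {x | t ≤ mollify b w x}, ‖fderiv ℝ (mollify b w) x‖ := by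
  obtain ⟨V, hV, hBV, hw⟩ := hv.exists_isOpen_mollify_eq_one hd hb
  exact ((hv.isSobolev_mollify b).one_sub_mul_toReal_cap1_le hV hBV hw ht₀ ht₁).trans <|
    ((hv.isSobolev_mollify b).sobolevNorm_above_le ht₀
      (hv.measurableSet_superlevel_mollify t)).trans
      (add_le_add_left (integral_norm_mollify_le b hv.integrable) _)

-- Mollifying does not increase the norm, so a nearly optimal mollified limit leaves little room
-- for gradients where it is small.
theorem eventually_setIntegral_norm_grad_lt (hv : IsTestSeq A N v g w)
    (hd : thickening d B ⊆ ⋃ j, A j) (hb : b.rOut < d) (ht₀ : 0 ≤ t) (ht₁ : t < 1)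
    {Q : Set (En n)} (hQ : MeasurableSet Q)
    (hPQ : ∀ x, t ≤ mollify b w x → ball x b.rOut ⊆ Qᶜ) {c : ℝ}
    (hc : N - (1 - t) * (cap1 B).toReal < c) :
    ∀ᶠ j in atTop, ∫ x in Q, ‖g j x‖ < c := by
  have hlim := hv.tendsto_integral_abs.add
    (hv.tendsto_setIntegral_norm_fderiv_mollify b {x | t ≤ mollify b w x})
  have hlt := (sub_lt_comm.1 hc).trans_le (hv.one_sub_mul_toReal_cap1_le hd hb ht₀ ht₁)
  filter_upwards [hlim.eventually_const_lt hlt] with j hj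
  have hgj := (hv.isCapTest j).integrable_grad
  have hN := hv.sobolevNorm_le j
  rw [sobolevNorm, ← integral_add_compl hQ hgj.norm] at hN
  linarith [setIntegral_norm_mollify_le b hgj (hv.measurableSet_superlevel_mollify t) hQ.compl hPQ]

theorem cap1_inter_le (hv : IsTestSeq A N v g w) (hA : Monotone A)
    (hd : thickening d B ⊆ ⋃ j, A j) (hb : b.rOut < d) (ht₀ : 0 ≤ t) (ht₁ : t ≤ 1 / 2) {τ : ℝ}
    (hτ₀ : 0 < τ) (hτ₁ : τ ≤ 1) (hbτ : b.rOut = 2 * τ) {S : Set (En n)} (hS : IsOpen S)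
    (hsmall : ∀ x ∈ thickening (9 * τ) S, mollify b w x < t) (k : ℕ) {c : ℝ}
    (hc : N - (1 - t) * (cap1 B).toReal < c) :
    cap1 (A k ∩ S) ≤ ENNReal.ofReal (10 * c) := by
  have hsep : ∀ x, t ≤ mollify b w x → ball x b.rOut ⊆ (thickening (7 * τ) S)ᶜ :=
    fun x hx y hyx hy => by
      have hxS := ball_subset_thickening_add hy b.rOut (mem_ball_comm.1 hyx)
      rw [hbτ, ← add_mul] at hxS
      norm_num1 at hxS
      exact (hsmall x hxS).not_ge hx
  obtain ⟨j, hj, hkj⟩ := ((hv.eventually_setIntegral_norm_grad_lt hd hb ht₀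
    (ht₁.trans_lt one_half_lt_one) isOpen_thickening.measurableSet hsep hc).and
      (eventually_ge_atTop k)).exists
  calc cap1 (A k ∩ S) ≤ cap1 (A j ∩ S) := cap1_mono (inter_subset_inter_left S (hA hkj))
    _ ≤ ENNReal.ofReal (10 * ∫ x in thickening (7 * τ) S, ‖g j x‖) :=
        (hv.isCapTest j).cap1_inter_le hS hτ₀ hτ₁ hbτ ht₀ ht₁ fun x hx =>
          (mollify_mono b (hv.isCapTest j).integrable.locallyIntegrable
            hv.integrable.locallyIntegrable (hv.le j) x).trans
          (hsmall x (thickening_mono (by linarith) S hx)).le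
    _ ≤ ENNReal.ofReal (10 * c) := by gcongr

-- The mollifications at scales `τ` and `12 * τ` are comparable, which converts smallness at one
-- point into smallness on a neighbourhood.
theorem exists_lipschitzWith_cap1_le (hv : IsTestSeq A N v g w) (hA : Monotone A) (hd₀ : 0 < d)
    (hd : thickening d B ⊆ ⋃ j, A j) :
    ∃ (F : En n → ℝ) (K : NNReal), LipschitzWith K F ∧
      (∀ s, 0 < s → s < 1 →
        cap1 {x | s < F x} ≤ ENNReal.ofReal ((N - (1 - s) * (cap1 B).toReal) / s)) ∧
      ∀ t, 0 < t → t ≤ 1 / 2 → ∀ k c, N - (1 - t) * (cap1 B).toReal < c →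
        cap1 (A k ∩ {x | 24 ^ n * F x < t}) ≤ ENNReal.ofReal (10 * c) := by
  obtain ⟨τ, hτ₀, hτ⟩ := exists_between (lt_min one_pos (div_pos hd₀ (by norm_num : (0 : ℝ) < 24)))
  obtain ⟨hτ₁, hτd⟩ := lt_min_iff.1 hτ
  let b : ContDiffBump (0 : En n) := ⟨τ, 2 * τ, hτ₀, by linarith⟩
  let b' : ContDiffBump (0 : En n) := ⟨12 * τ, 24 * τ, by linarith, by linarith⟩
  obtain ⟨K, hK⟩ := exists_lipschitzWith_mollify b' hv.integrable
  refine ⟨mollify b' w, K, hK,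
    fun s => hv.cap1_superlevel_mollify_le (b := b') hd (by change 24 * τ < d; linarith),
    fun t ht₀ ht₁ k c hc => hv.cap1_inter_le (b := b) hA hd (by change 2 * τ < d; linarith) ht₀.le
      ht₁ hτ₀ hτ₁.le rfl (isOpen_lt (hK.continuous.const_mul _) continuous_const) ?_ k hc⟩
  intro x hx
  obtain ⟨z, hz, hxz⟩ := mem_thickening_iff.1 hx
  have hle : mollify b w x ≤ 24 ^ Module.finrank ℝ (En n) * mollify b' w z :=
    mollify_le_mul_mollify (b := b) (b' := b') le_rfl hv.integrable.locallyIntegrable hv.nonneg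
      (by change dist z x + 2 * τ ≤ 12 * τ; linarith [dist_comm x z])
  rw [finrank_euclideanSpace_fin] at hle
  exact hle.trans_lt hz

end IsTestSeq

end Improvement

section UniformExhaustion

variable {A : ℕ → Set (En n)}

/-- An increasing sequence of sets, each having a neighbourhood of positive width inside the
union: the width leaves room for mollification. -/
structure IsUniformExhaustion (A : ℕ → Set (En n)) : Prop where
  monotone : Monotone A
  exists_thickening_subset : ∀ k, ∃ d > 0, thickening d (A k) ⊆ ⋃ j, A j

theorem IsUniformExhaustion.inter_sublevel (hA : IsUniformExhaustion A) {F : En n → ℝ} {K : NNReal}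
    (hF : LipschitzWith K F) {σ : ℕ → ℝ} (hσ : StrictMono σ) :
    IsUniformExhaustion fun k => A k ∩ {x | F x < σ k} := by
  refine ⟨fun i j hij => inter_subset_inter (hA.monotone hij)
    fun x hx => lt_of_lt_of_le hx (hσ.monotone hij), fun k => ?_⟩
  obtain ⟨d, hd₀, hd⟩ := hA.exists_thickening_subset k
  have hgap : 0 < σ (k + 1) - σ k := sub_pos.2 (hσ k.lt_succ_self)
  refine ⟨min d ((σ (k + 1) - σ k) / (K + 1)), lt_min hd₀ (by positivity), fun x hx => ?_⟩
  obtain ⟨y, ⟨hyA, hyF⟩, hxy⟩ := mem_thickening_iff.1 hx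
  obtain ⟨hxyd, hxyσ⟩ := lt_min_iff.1 hxy
  obtain ⟨j, hj⟩ := mem_iUnion.1 (hd (mem_thickening_iff.2 ⟨y, hyA, hxyd⟩))
  rw [lt_div_iff₀ (by positivity)] at hxyσ
  have hFxy : F x - F y ≤ K * dist x y := (le_abs_self _).trans (hF.dist_le_mul x y)
  have hFσ : F x < σ (k + 1) := by
    linarith [show F y < σ k from hyF, dist_nonneg (x := x) (y := y)]
  exact mem_iUnion.2 ⟨max j (k + 1), hA.monotone (le_max_left _ _) hj,
    hFσ.trans_le (hσ.monotone (le_max_right _ _))⟩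

theorem exists_sub_lt_toReal_cap1 (hfin : ⨆ k, cap1 (A k) ≠ ∞) {η : ℝ} (hη : 0 < η) :
    ∃ k, (⨆ k, cap1 (A k)).toReal - η < (cap1 (A k)).toReal := by
  refine exists_lt_of_lt_ciSup ?_
  rw [← ENNReal.toReal_iSup fun k => ne_top_of_le_ne_top hfin (le_iSup (fun k => cap1 (A k)) k)]
  exact sub_lt_self _ hη

theorem IsUniformExhaustion.exists_lipschitzWith_cap1_le (hA : IsUniformExhaustion A)
    (hfin : ⨆ k, cap1 (A k) ≠ ∞) {ε : ℝ} (hε : 0 < ε) :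
    ∃ (F : En n → ℝ) (K : NNReal) (s : ℝ), LipschitzWith K F ∧ 0 < s ∧
      cap1 {x | s < F x} ≤ (⨆ k, cap1 (A k)) + ENNReal.ofReal ε ∧
      ∀ k, cap1 (A k ∩ {x | F x < 2 * s}) ≤ ENNReal.ofReal ε := by
  set M := (⨆ k, cap1 (A k)).toReal
  have hM₀ : 0 ≤ M := ENNReal.toReal_nonneg
  obtain ⟨t, ht₀, ht⟩ := exists_between
    (lt_min one_half_pos (by positivity : 0 < ε / (20 * (M + 1))))
  obtain ⟨ht₁, htM⟩ := lt_min_iff.1 ht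
  rw [lt_div_iff₀ (by positivity)] at htM
  set s := t / (2 * 24 ^ n) with hs
  have hs₀ : 0 < s := by positivity
  have hs₁ : s < 1 := (div_le_self ht₀.le (by
    linarith [one_le_pow₀ (by norm_num : (1 : ℝ) ≤ 24) (n := n)])).trans_lt (by linarith)
  obtain ⟨η, hη₀, hη⟩ := exists_between
    (lt_min (by positivity : 0 < ε / 40) (by positivity : 0 < ε * s / 2))
  obtain ⟨hηε, hηs⟩ := lt_min_iff.1 hη
  obtain ⟨v, g, w, hv⟩ := exists_isTestSeq hA.monotone hfin hη₀
  obtain ⟨k₀, hk₀⟩ := exists_sub_lt_toReal_cap1 hfin hη₀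
  obtain ⟨d, hd₀, hd⟩ := hA.exists_thickening_subset k₀
  obtain ⟨F, K, hF, hsuper, hsub⟩ := hv.exists_lipschitzWith_cap1_le hA.monotone hd₀ hd
  refine ⟨F, K, s, hF, hs₀, (hsuper s hs₀ hs₁).trans ?_, fun k => ?_⟩
  · have hsum : (⨆ k, cap1 (A k)) + ENNReal.ofReal ε = ENNReal.ofReal (M + ε) := by
      rw [ENNReal.ofReal_add hM₀ hε.le, ENNReal.ofReal_toReal hfin]
    rw [hsum]
    refine ENNReal.ofReal_le_ofReal ((div_le_iff₀ hs₀).2 ?_)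
    nlinarith
  · have hlevel : {x | F x < 2 * s} = {x | 24 ^ n * F x < t} := by
      ext x
      simp only [mem_ofPred_eq, hs]
      rw [← mul_div_assoc, mul_div_mul_left _ _ two_ne_zero, lt_div_iff₀' (by positivity)]
    rw [hlevel]
    refine (hsub t ht₀ ht₁.le k (t * M + 2 * η) (by nlinarith)).trans
      (ENNReal.ofReal_le_ofReal (by linarith))

theorem IsUniformExhaustion.exists_reduction (hA : IsUniformExhaustion A)
    (hfin : ⨆ k, cap1 (A k) ≠ ∞) {ε : ℝ} (hε : 0 < ε) :
    ∃ (A' : ℕ → Set (En n)) (W : Set (En n)), IsUniformExhaustion A' ∧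
      (∀ k, cap1 (A' k) ≤ ENNReal.ofReal ε) ∧
      cap1 W ≤ (⨆ k, cap1 (A k)) + ENNReal.ofReal ε ∧ ∀ k, A k ⊆ W ∪ A' k := by
  obtain ⟨F, K, s, hF, hs₀, hW, hsub⟩ := hA.exists_lipschitzWith_cap1_le hfin hε
  obtain ⟨σ, hσ, hσs, -⟩ := exists_seq_strictMono_tendsto' (lt_two_mul_self hs₀)
  refine ⟨_, _, hA.inter_sublevel hF hσ, fun k => (cap1_mono ?_).trans (hsub k), hW,
    fun k x hx => (lt_or_ge s (F x)).imp id fun hFx => ⟨hx, hFx.trans_lt (hσs k).1⟩⟩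
  exact inter_subset_inter_right _ fun x hx => lt_trans hx (hσs k).2

end UniformExhaustion

section Iteration

theorem cap1_iUnion_le_tsum_of_subset_union {B : ℕ → ℕ → Set (En n)} {W : ℕ → Set (En n)}
    (hB : ∀ i k, B i k ⊆ W i ∪ B (i + 1) k)
    (hlim : ∀ k, Tendsto (fun i => cap1 (B i k)) atTop (𝓝 0)) :
    cap1 (⋃ k, B 0 k) ≤ ∑' i, cap1 (W i) := by
  have hcover : ⋃ k, B 0 k ⊆ (⋃ i, W i) ∪ ⋃ k, ⋂ i, B i k := by
    refine iUnion_subset fun k x hx => or_iff_not_imp_left.2 fun hxW => ?_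
    refine mem_iUnion.2 ⟨k, mem_iInter.2 fun i => ?_⟩
    induction i with
    | zero => exact hx
    | succ i ih => exact (hB i k ih).resolve_left fun h => hxW (mem_iUnion.2 ⟨i, h⟩)
  have hnull : cap1 (⋃ k, ⋂ i, B i k) = 0 := cap1_iUnion_eq_zero fun k =>
    nonpos_iff_eq_zero.1 (ge_of_tendsto' (hlim k) fun i => cap1_mono (iInter_subset _ i))
  calc cap1 (⋃ k, B 0 k) ≤ cap1 (⋃ i, W i) + cap1 (⋃ k, ⋂ i, B i k) :=
        (cap1_mono hcover).trans (cap1_union_le _ _)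
    _ ≤ ∑' i, cap1 (W i) := by simpa only [hnull, add_zero] using cap1_iUnion_le W

theorem tsum_le_add_two_mul_tsum {a ε : ℕ → ℝ≥0∞} {M : ℝ≥0∞} (h₀ : a 0 ≤ M + ε 0)
    (hsucc : ∀ i, a (i + 1) ≤ ε i + ε (i + 1)) : ∑' i, a i ≤ M + 2 * ∑' i, ε i := by
  calc ∑' i, a i = a 0 + ∑' i, a (i + 1) := tsum_eq_zero_add' ENNReal.summable
    _ ≤ (M + ε 0) + ∑' i, (ε i + ε (i + 1)) := add_le_add h₀ (ENNReal.tsum_le_tsum hsucc)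
    _ = M + (∑' i, ε i + (ε 0 + ∑' i, ε (i + 1))) := by rw [ENNReal.tsum_add]; ring
    _ = M + 2 * ∑' i, ε i := by rw [← tsum_eq_zero_add' ENNReal.summable, two_mul]

theorem IsUniformExhaustion.cap1_iUnion_le {A : ℕ → Set (En n)} (hA : IsUniformExhaustion A) :
    cap1 (⋃ k, A k) ≤ ⨆ k, cap1 (A k) := by
  rcases eq_or_ne (⨆ k, cap1 (A k)) ∞ with hfin | hfin
  · exact hfin.symm ▸ le_top
  refine ENNReal.le_of_forall_pos_le_add fun δ hδ _ => ?_
  obtain ⟨ε, hε₀, hε⟩ := ENNReal.exists_pos_sum_of_countable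
    (ENNReal.coe_ne_zero.2 (half_pos hδ).ne') ℕ
  obtain ⟨B, rfl, -, hstep⟩ := exists_seq_of_forall_exists_succ
    (P := fun _ B => IsUniformExhaustion B ∧ ⨆ k, cap1 (B k) ≠ ∞)
    (r := fun i B B' => (∀ k, cap1 (B' k) ≤ ε i) ∧
      ∃ W, cap1 W ≤ (⨆ k, cap1 (B k)) + ε i ∧ ∀ k, B k ⊆ W ∪ B' k)
    ⟨hA, hfin⟩ fun i B ⟨hB, hBfin⟩ => by
      obtain ⟨B', W, hB', hcap, hW, hsub⟩ := hB.exists_reduction hBfin (NNReal.coe_pos.2 (hε₀ i))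
      rw [ENNReal.ofReal_coe_nnreal] at hcap hW
      exact ⟨B', ⟨hB', ne_top_of_le_ne_top ENNReal.coe_ne_top (iSup_le hcap)⟩, hcap, W, hW, hsub⟩
  choose hcap W hW hsub using hstep
  have hlim : ∀ k, Tendsto (fun i => cap1 (B i k)) atTop (𝓝 0) := fun k =>
    (tendsto_add_atTop_iff_nat 1).1 <| tendsto_of_tendsto_of_tendsto_of_le_of_le
      tendsto_const_nhds (ENNReal.tendsto_atTop_zero_of_tsum_ne_top hε.ne_top)
      (fun _ => zero_le) fun i => hcap i k
  calc cap1 (⋃ k, B 0 k) ≤ ∑' i, cap1 (W i) := cap1_iUnion_le_tsum_of_subset_union hsub hlim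
    _ ≤ (⨆ k, cap1 (B 0 k)) + 2 * ∑' i, (ε i : ℝ≥0∞) :=
        tsum_le_add_two_mul_tsum (hW 0) fun i =>
          (hW (i + 1)).trans (add_le_add_left (iSup_le (hcap i)) _)
    _ ≤ (⨆ k, cap1 (B 0 k)) + 2 * ((δ / 2 : NNReal) : ℝ≥0∞) := by gcongr
    _ = (⨆ k, cap1 (B 0 k)) + δ := by
        rw [two_mul, ← ENNReal.coe_add, add_halves]

end Iteration

section Shrink

variable {A V : ℕ → Set (En n)}

/-- The points of `V k` at distance at least `1 / (k + 1)` from the complement. An increasing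
sequence of open sets is thereby replaced by a uniform exhaustion of its union. -/
def shrink (V : ℕ → Set (En n)) (k : ℕ) : Set (En n) := {x | ball x (1 / ((k : ℝ) + 1)) ⊆ V k}

theorem shrink_subset (V : ℕ → Set (En n)) (k : ℕ) : shrink V k ⊆ V k :=
  fun _ hx => hx (mem_ball_self (by positivity))

theorem mem_shrink_of_ball_subset (hV : Monotone V) {j k : ℕ} (hjk : j ≤ k) {x : En n} {r : ℝ}
    (hr : 1 / ((k : ℝ) + 1) ≤ r) (hx : ball x r ⊆ V j) : x ∈ shrink V k :=
  ((ball_subset_ball hr).trans hx).trans (hV hjk)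

theorem isUniformExhaustion_shrink (hV : Monotone V) : IsUniformExhaustion (shrink V) := by
  refine ⟨fun i j hij x hx => mem_shrink_of_ball_subset hV hij (by gcongr) hx, fun k => ?_⟩
  refine ⟨1 / (2 * (k + 1)), by positivity, fun x hx => mem_iUnion.2 ⟨2 * k + 1, ?_⟩⟩
  obtain ⟨y, hy, hxy⟩ := mem_thickening_iff.1 hx
  refine mem_shrink_of_ball_subset hV (by lia : k ≤ 2 * k + 1) ?_
    ((ball_subset_ball' (add_le_of_le_sub_right (sub_le_sub_left hxy.le _))).trans hy)
  refine le_of_eq ?_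
  push_cast
  field_simp
  ring

theorem iUnion_shrink (hV : Monotone V) (ho : ∀ k, IsOpen (V k)) : ⋃ k, shrink V k = ⋃ k, V k := by
  refine (iUnion_mono (shrink_subset V)).antisymm (iUnion_subset fun k x hx => ?_)
  obtain ⟨r, hr, hball⟩ := Metric.isOpen_iff.1 (ho k) x hx
  obtain ⟨m, hm⟩ := exists_nat_one_div_lt hr
  refine mem_iUnion.2 ⟨max k m, mem_shrink_of_ball_subset hV (le_max_left k m) ?_ hball⟩
  exact (one_div_le_one_div_of_le (by positivity) (by gcongr; exact le_max_right k m)).trans hm.le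

theorem exists_monotone_isOpen (hA : Monotone A) (hfin : ⨆ k, cap1 (A k) ≠ ∞) {η : ℝ}
    (hη : 0 < η) : ∃ V : ℕ → Set (En n), Monotone V ∧ (∀ k, IsOpen (V k)) ∧ (∀ k, A k ⊆ V k) ∧
      ∀ k, cap1 (V k) ≤ (⨆ k, cap1 (A k)) + ENNReal.ofReal η := by
  obtain ⟨v, g, w, hv⟩ := exists_isTestSeq hA hfin hη
  choose U hU hAU hv₁ using fun j => (hv.isCapTest j).eq_one
  refine ⟨accumulate U, monotone_accumulate, fun k => isOpen_biUnion fun i _ => hU i,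
    fun k => (hAU k).trans subset_accumulate, fun k => ?_⟩
  have hle : ∀ x ∈ accumulate U k, 1 ≤ v k x := fun x hx => by
    obtain ⟨i, hik, hxi⟩ := mem_accumulate.1 hx
    exact (hv₁ i x hxi).symm.trans_le (hv.monotone hik x)
  calc cap1 (accumulate U k) ≤ ENNReal.ofReal (sobolevNorm (v k) (g k)) :=
        (hv.isCapTest k).cap1_le (isOpen_biUnion fun i _ => hU i) subset_rfl (ae_of_all _ hle)
    _ ≤ ENNReal.ofReal ((⨆ k, cap1 (A k)).toReal + η) :=
        ENNReal.ofReal_le_ofReal (hv.sobolevNorm_le k)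
    _ = (⨆ k, cap1 (A k)) + ENNReal.ofReal η := by
        rw [ENNReal.ofReal_add ENNReal.toReal_nonneg hη.le, ENNReal.ofReal_toReal hfin]

theorem cap1_iUnion_le_iSup (hA : Monotone A) : cap1 (⋃ k, A k) ≤ ⨆ k, cap1 (A k) := by
  rcases eq_or_ne (⨆ k, cap1 (A k)) ∞ with hfin | hfin
  · exact hfin.symm ▸ le_top
  refine ENNReal.le_of_forall_pos_le_add fun η hη _ => ?_
  obtain ⟨V, hV, hVo, hAV, hcap⟩ := exists_monotone_isOpen hA hfin (NNReal.coe_pos.2 hη)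
  rw [ENNReal.ofReal_coe_nnreal] at hcap
  calc cap1 (⋃ k, A k) ≤ cap1 (⋃ k, shrink V k) := by
        rw [iUnion_shrink hV hVo]; exact cap1_mono (iUnion_mono hAV)
    _ ≤ ⨆ k, cap1 (shrink V k) := (isUniformExhaustion_shrink hV).cap1_iUnion_le
    _ ≤ (⨆ k, cap1 (A k)) + η := iSup_le fun k => (cap1_mono (shrink_subset V k)).trans (hcap k)

end Shrink

theorem cap1_tendsto_of_monotone_general (A : ℕ → Set (En n)) (hA : Monotone A) :
    Tendsto (fun j => cap1 (A j)) atTop (𝓝 (cap1 (⋃ j, A j))) := by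
  have hsup : cap1 (⋃ j, A j) = ⨆ j, cap1 (A j) :=
    (cap1_iUnion_le_iSup hA).antisymm (iSup_le fun j => cap1_mono (subset_iUnion A j))
  rw [hsup]
  exact tendsto_atTop_iSup fun i j hij => cap1_mono (hA hij)

/-- Continuity of the Sobolev 1-capacity along increasing sequences of sets. -/
theorem cap1_tendsto_of_monotone (hn : 2 ≤ n) (A : ℕ → Set (En n)) (hA : Monotone A) :
    Tendsto (fun j => cap1 (A j)) atTop (𝓝 (cap1 (⋃ j, A j))) :=
  cap1_tendsto_of_monotone_general A hA

end
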